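/- arXiv:math/0401243 — 5 statements merged into one kernel-verified Lean document; each statement's English description precedes it below -/
import Mathlib

section
/- Let n ≥ 1 be an integer, t > 0 and λ a nonzero real number. For all a, b ∈ ℝ^n, ∫_{ℂ^{2n}} p_{2t}^λ(z+a, w+b) · exp((iλ/2)(a·w - b·z)) · conj(p_{2t}^λ(z,w)) · W_t^λ(z,w) dz dw = p_{2t}^λ(a,b). -/
open MeasureTheory Complex Filter Topology

noncomputable section

/-- Real hyperbolic cotangent. -/
def cothR (x : ℝ) : ℝ := Real.cosh x / Real.sinh x

/-- Bilinear dot product on `ℂ^n`: `z · w = ∑ j, z j * w j`. -/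
def dotC {n : ℕ} (z w : Fin n → ℂ) : ℂ := ∑ j, z j * w j

/-- Embedding `ℝ^n → ℂ^n`. -/
def embC {n : ℕ} (x : Fin n → ℝ) : Fin n → ℂ := fun j => (x j : ℂ)

/-- The twisted heat kernel `p_t^λ` on `ℂ^{2n}`. -/
def pC (n : ℕ) (t lam : ℝ) (z w : Fin n → ℂ) : ℂ :=
  (((4 * Real.pi) ^ n)⁻¹ : ℝ) * (((lam / Real.sinh (t * lam)) ^ n : ℝ) : ℂ) *
    Complex.exp (((-(lam / 4) * cothR (t * lam) : ℝ) : ℂ) * (dotC z z + dotC w w))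

/-- The twisted heat kernel on `ℝ^{2n}` (real-valued version). -/
def pR (n : ℕ) (t lam : ℝ) (x u : Fin n → ℝ) : ℝ :=
  ((4 * Real.pi) ^ n)⁻¹ * (lam / Real.sinh (t * lam)) ^ n *
    Real.exp (-(lam / 4) * cothR (t * lam) * ((∑ j, (x j) ^ 2) + ∑ j, (u j) ^ 2))

/-- The weight function `W_t^λ(x+iy, u+iv) = 4^n exp(λ(u·y - v·x)) p_{2t}^λ(2y, 2v)`. -/
def Wt (n : ℕ) (t lam : ℝ) (z w : Fin n → ℂ) : ℝ :=
  4 ^ n * Real.exp (lam * ((∑ j, (w j).re * (z j).im) - ∑ j, (w j).im * (z j).re)) *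
    pR n (2 * t) lam (fun j => 2 * (z j).im) (fun j => 2 * (w j).im)


lemma gauss1 (A : ℝ) (hA : 0 < A) (α : ℂ) :
    ∫ z : ℂ, Complex.exp (-(A : ℂ) * ((z.re ^ 2 + z.im ^ 2 : ℝ) : ℂ) + α * z) = ((Real.pi / A : ℝ) : ℂ) := by
  rw [← (Complex.volume_preserving_equiv_real_prod.symm).integral_comp']
  have h1 : ∀ p : ℝ × ℝ, Complex.exp (-(A : ℂ) * (((Complex.measurableEquivRealProd.symm p).re ^ 2
      + (Complex.measurableEquivRealProd.symm p).im ^ 2 : ℝ) : ℂ)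
        + α * (Complex.measurableEquivRealProd.symm p)) =
      Complex.exp (-(A : ℂ) * (p.1 : ℂ) ^ 2 + α * p.1 + 0) *
      Complex.exp (-(A : ℂ) * (p.2 : ℂ) ^ 2 + (α * I) * p.2 + 0) := by
    rintro ⟨x, y⟩
    rw [← Complex.exp_add]
    congr 1
    simp only [Complex.measurableEquivRealProd_symm_apply]
    rw [Complex.mk_eq_add_mul_I]
    push_cast
    simp
    ring
  simp_rw [h1]
  rw [Measure.volume_eq_prod, integral_prod_mul (μ := volume) (ν := volume)
    (fun x : ℝ => Complex.exp (-(A : ℂ) * (x : ℂ) ^ 2 + α * x + 0))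
    (fun x : ℝ => Complex.exp (-(A : ℂ) * (x : ℂ) ^ 2 + (α * I) * x + 0))]
  have hre : (-(A : ℂ)).re < 0 := by simpa using hA
  rw [integral_cexp_quadratic hre, integral_cexp_quadratic hre]
  have hA' : (A : ℂ) ≠ 0 := by exact_mod_cast hA.ne'
  have hX : ((Real.pi : ℂ) / -(-(A : ℂ))) ≠ 0 := by
    rw [neg_neg]; exact div_ne_zero (by exact_mod_cast Real.pi_ne_zero) hA'
  rw [mul_mul_mul_comm, ← Complex.cpow_add _ _ hX, ← Complex.exp_add]
  have e1 : (0 - α ^ 2 / (4 * -(A : ℂ)) + (0 - (α * I) ^ 2 / (4 * -(A : ℂ)))) = 0 := by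
    rw [mul_pow, I_sq]; ring
  rw [e1]
  norm_num

lemma gauss2 (A l : ℝ) (hA : 0 < A) (hD : 0 < A ^ 2 - l ^ 2 / 4) (α β : ℂ) :
    ∫ q : ℂ × ℂ, Complex.exp (-(A : ℂ) * ((q.1.re ^ 2 + q.1.im ^ 2 + q.2.re ^ 2 + q.2.im ^ 2 : ℝ) : ℂ)
      + ((l * (q.2.re * q.1.im - q.2.im * q.1.re) : ℝ) : ℂ) + α * q.1 + β * q.2)
      = ((Real.pi ^ 2 / (A ^ 2 - l ^ 2 / 4) : ℝ) : ℂ) := by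
  set κ : ℂ := ⟨0, -(l / (2 * A))⟩ with hκ
  have hmp : MeasurePreserving (fun p : ℂ × ℂ => (p.1, p.2 + κ * p.1)) (volume.prod volume) (volume.prod volume) :=
    MeasurePreserving.skew_product (g := fun x y => y + κ * x) (MeasurePreserving.id volume)
      (by unfold Function.uncurry; fun_prop)
      (Filter.Eventually.of_forall fun x => map_add_right_eq_self volume (κ * x))
  have hemb : MeasurableEmbedding (fun p : ℂ × ℂ => (p.1, p.2 + κ * p.1)) := by
    let e : (ℂ × ℂ) ≃ₜ (ℂ × ℂ) :=
      { toFun := fun p => (p.1, p.2 + κ * p.1)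
        invFun := fun p => (p.1, p.2 - κ * p.1)
        left_inv := fun p => by simp
        right_inv := fun p => by simp
        continuous_toFun := by fun_prop
        continuous_invFun := by fun_prop }
    exact e.measurableEmbedding
  rw [Measure.volume_eq_prod, ← hmp.integral_comp hemb]
  have hDD : 0 < A - l ^ 2 / (4 * A) := by
    have : A - l ^ 2 / (4 * A) = (A ^ 2 - l ^ 2 / 4) / A := by field_simp
    rw [this]; positivity
  have h1 : ∀ p : ℂ × ℂ, Complex.exp (-(A : ℂ) * ((p.1.re ^ 2 + p.1.im ^ 2 + (p.2 + κ * p.1).re ^ 2 + (p.2 + κ * p.1).im ^ 2 : ℝ) : ℂ)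
      + ((l * ((p.2 + κ * p.1).re * p.1.im - (p.2 + κ * p.1).im * p.1.re) : ℝ) : ℂ) + α * p.1 + β * (p.2 + κ * p.1)) =
      Complex.exp (-((A - l ^ 2 / (4 * A) : ℝ) : ℂ) * ((p.1.re ^ 2 + p.1.im ^ 2 : ℝ) : ℂ) + (α + β * κ) * p.1) *
      Complex.exp (-(A : ℂ) * ((p.2.re ^ 2 + p.2.im ^ 2 : ℝ) : ℂ) + β * p.2) := by
    rintro ⟨z, w⟩
    rw [← Complex.exp_add]
    congr 1
    have key : -A * (z.re ^ 2 + z.im ^ 2 + (w + κ * z).re ^ 2 + (w + κ * z).im ^ 2) +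
        l * ((w + κ * z).re * z.im - (w + κ * z).im * z.re) =
        -(A - l ^ 2 / (4 * A)) * (z.re ^ 2 + z.im ^ 2) + -A * (w.re ^ 2 + w.im ^ 2) := by
      simp only [hκ, Complex.add_re, Complex.add_im, Complex.mul_re, Complex.mul_im]
      field_simp
      ring
    have key' := congrArg Complex.ofReal key
    rw [Complex.ofReal_add, Complex.ofReal_add, Complex.ofReal_mul, Complex.ofReal_mul (-(A - _)), Complex.ofReal_mul (-A) (w.re ^ 2 + w.im ^ 2), Complex.ofReal_neg, Complex.ofReal_neg] at key'
    rw [key']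
    ring
  simp only [h1]
  rw [integral_prod_mul (μ := volume) (ν := volume)
    (fun z : ℂ => Complex.exp (-((A - l ^ 2 / (4 * A) : ℝ) : ℂ) * ((z.re ^ 2 + z.im ^ 2 : ℝ) : ℂ) + (α + β * κ) * z))
    (fun z : ℂ => Complex.exp (-(A : ℂ) * ((z.re ^ 2 + z.im ^ 2 : ℝ) : ℂ) + β * z)),
    gauss1 _ hDD, gauss1 _ hA, ← Complex.ofReal_mul]
  congr 1
  rw [div_mul_div_comm]
  congr 1
  · ring
  · field_simp

theorem reproducing_identity
    (n : ℕ) (hn : 1 ≤ n) (t lam : ℝ) (ht : 0 < t) (hlam : lam ≠ 0)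
    (a b : Fin n → ℝ) :
    ∫ q : (Fin n → ℂ) × (Fin n → ℂ),
      pC n (2 * t) lam (q.1 + embC a) (q.2 + embC b) *
        Complex.exp ((Complex.I * lam / 2) * (dotC (embC a) q.2 - dotC (embC b) q.1)) *
        (starRingEnd ℂ) (pC n (2 * t) lam q.1 q.2) * (Wt n t lam q.1 q.2 : ℂ)
      = pC n (2 * t) lam (embC a) (embC b) := by
  have hsl : 2 * t * lam ≠ 0 := by positivity
  have hsh : Real.sinh (2 * t * lam) ≠ 0 := by simpa using hsl
  set s : ℝ := lam / Real.sinh (2 * t * lam) with hs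
  have hs0 : s ≠ 0 := div_ne_zero hlam hsh
  set c : ℝ := lam / 4 * cothR (2 * t * lam) with hc
  have hcoth : s * Real.cosh (2 * t * lam) = 4 * c := by
    rw [hs, hc, cothR]; field_simp
  have hspos : 0 < s := by
    rw [hs]
    rcases lt_or_gt_of_ne hlam with h | h
    · exact div_pos_of_neg_of_neg h (Real.sinh_neg_iff.2 (by nlinarith))
    · exact div_pos h (Real.sinh_pos_iff.2 (by positivity))
  have hcpos : 0 < c := by
    have := mul_pos hspos (Real.cosh_pos (2 * t * lam))
    linarith
  have hdet : (2 * c) ^ 2 - lam ^ 2 / 4 = s ^ 2 / 4 := by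
    have h1 : s * Real.sinh (2 * t * lam) = lam := by rw [hs]; field_simp
    have h2 := Real.cosh_sq (2 * t * lam)
    have h3 : (2 * c) ^ 2 = s ^ 2 * Real.cosh (2 * t * lam) ^ 2 / 4 := by
      rw [← mul_pow, hcoth]; ring
    have h4 : lam ^ 2 = s ^ 2 * Real.sinh (2 * t * lam) ^ 2 := by rw [← mul_pow, h1]
    linear_combination h3 + s ^ 2 / 4 * h2 - h4 / 4
  have hpC : ∀ z w : Fin n → ℂ, pC n (2 * t) lam z w = (((s / (4 * Real.pi)) ^ n : ℝ) : ℂ) *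
      Complex.exp (((-c : ℝ) : ℂ) * ∑ j, (z j ^ 2 + w j ^ 2)) := by
    intro z w
    rw [pC, ← hs, ← Complex.ofReal_mul]
    congr 1
    · congr 1
      rw [div_pow s, mul_comm, ← div_eq_mul_inv]
    · congr 2
      · rw [hc]; congr 1; ring
      · simp only [dotC, ← Finset.sum_add_distrib, pow_two]
  have hWt : ∀ z w : Fin n → ℂ, (Wt n t lam z w : ℂ) = (((4 * (s / (4 * Real.pi))) ^ n : ℝ) : ℂ) *
      Complex.exp ((∑ j, (lam * ((w j).re * (z j).im - (w j).im * (z j).re)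
        + -4 * c * ((z j).im ^ 2 + (w j).im ^ 2)) : ℝ) : ℂ) := by
    intro z w
    rw [← Complex.ofReal_exp, ← Complex.ofReal_mul]
    congr 1
    rw [Wt, pR, ← hs, Finset.sum_add_distrib, Real.exp_add, ← Finset.mul_sum, Finset.sum_sub_distrib]
    have : -(lam / 4) * cothR (2 * t * lam) * (∑ j, (2 * (z j).im) ^ 2 + ∑ j, (2 * (w j).im) ^ 2)
        = ∑ j, -4 * c * ((z j).im ^ 2 + (w j).im ^ 2) := by
      rw [← Finset.sum_add_distrib, Finset.mul_sum]
      refine Finset.sum_congr rfl fun j _ => ?_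
      rw [hc]; ring
    rw [this, mul_pow 4 (s / _), div_pow s]
    ring
  have hpt : ∀ x : Fin n → ℂ × ℂ,
      pC n (2 * t) lam ((fun j => (x j).1) + embC a) ((fun j => (x j).2) + embC b) *
        Complex.exp ((Complex.I * lam / 2) * (dotC (embC a) (fun j => (x j).2) - dotC (embC b) (fun j => (x j).1))) *
        (starRingEnd ℂ) (pC n (2 * t) lam (fun j => (x j).1) (fun j => (x j).2)) * (Wt n t lam (fun j => (x j).1) (fun j => (x j).2) : ℂ)
      = ∏ j, ((4 * (s / (4 * Real.pi)) ^ 3 * Real.exp (-c * (a j ^ 2 + b j ^ 2)) : ℝ) : ℂ) *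
        Complex.exp (-((2 * c : ℝ) : ℂ) * (((x j).1.re ^ 2 + (x j).1.im ^ 2 + (x j).2.re ^ 2 + (x j).2.im ^ 2 : ℝ) : ℂ)
          + ((lam * ((x j).2.re * (x j).1.im - (x j).2.im * (x j).1.re) : ℝ) : ℂ)
          + (-2 * c * a j - I * lam / 2 * b j) * (x j).1 + (-2 * c * b j + I * lam / 2 * a j) * (x j).2) := by
    intro x
    rw [hpC, hpC, hWt]
    simp only [map_mul, ← Complex.exp_conj, Complex.conj_ofReal, map_sum, map_add, map_pow]
    have hR : ∀ j, ((4 * (s / (4 * Real.pi)) ^ 3 * Real.exp (-c * (a j ^ 2 + b j ^ 2)) : ℝ) : ℂ) =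
        ((4 * (s / (4 * Real.pi)) ^ 3 : ℝ) : ℂ) * Complex.exp (((-c * (a j ^ 2 + b j ^ 2) : ℝ) : ℂ)) := by
      intro j; push_cast; rfl
    have hR2 : ∀ (k e1 e2 : ℂ), k * Complex.exp e1 * Complex.exp e2 = k * Complex.exp (e1 + e2) := by
      intro k e1 e2; rw [Complex.exp_add, mul_assoc]
    simp only [hR, hR2]
    rw [Finset.prod_mul_distrib, Finset.prod_const, ← Complex.exp_sum, Finset.card_univ, Fintype.card_fin]
    have hcomb : ∀ k m : ℝ, ∀ e1 e2 e3 e4 : ℂ, (k : ℂ) * Complex.exp (e1 + e2) *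
        ((k : ℂ) * Complex.exp e3) * ((m : ℂ) * Complex.exp e4) =
        ((k * k * m : ℝ) : ℂ) * Complex.exp (e1 + e2 + e3 + e4) := by
      intro k m e1 e2 e3 e4
      simp only [Complex.exp_add]; push_cast; ring
    rw [hcomb]
    congr 1
    · rw [← Complex.ofReal_pow]
      congr 1
      rw [← mul_pow, ← mul_pow]
      congr 1
      ring
    · congr 1
      simp only [dotC, embC, Pi.add_apply]
      simp only [Complex.ofReal_sum]
      rw [← Finset.sum_sub_distrib, Finset.mul_sum, Finset.mul_sum, Finset.mul_sum,
        ← Finset.sum_add_distrib, ← Finset.sum_add_distrib, ← Finset.sum_add_distrib]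
      refine Finset.sum_congr rfl fun j _ => ?_
      generalize x j = p
      obtain ⟨⟨x, y⟩, ⟨u, v⟩⟩ := p
      simp only [Complex.ext_iff]
      simp [pow_two]
      constructor <;> ring
  have hfin : pC n (2 * t) lam (embC a) (embC b) =
      ∏ j, ((s / (4 * Real.pi) * Real.exp (-c * (a j ^ 2 + b j ^ 2)) : ℝ) : ℂ) := by
    rw [hpC, Finset.mul_sum, Complex.exp_sum, Complex.ofReal_pow]
    have : ((s / (4 * Real.pi) : ℝ) : ℂ) ^ n = ∏ j : Fin n, ((s / (4 * Real.pi) : ℝ) : ℂ) := by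
      rw [Finset.prod_const, Finset.card_univ, Fintype.card_fin]
    rw [this, ← Finset.prod_mul_distrib]
    refine Finset.prod_congr rfl fun j _ => ?_
    simp only [embC]
    push_cast
    rfl
  rw [← (volume_measurePreserving_arrowProdEquivProdArrow ℂ ℂ (Fin n)).integral_comp']
  refine (integral_congr_ae (Filter.Eventually.of_forall hpt)).trans ?_
  rw [integral_fintype_prod_volume_eq_prod (fun j (q : ℂ × ℂ) => ((4 * (s / (4 * Real.pi)) ^ 3 * Real.exp (-c * (a j ^ 2 + b j ^ 2)) : ℝ) : ℂ) *
        Complex.exp (-((2 * c : ℝ) : ℂ) * ((q.1.re ^ 2 + q.1.im ^ 2 + q.2.re ^ 2 + q.2.im ^ 2 : ℝ) : ℂ)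
          + ((lam * (q.2.re * q.1.im - q.2.im * q.1.re) : ℝ) : ℂ)
          + (-2 * c * a j - I * lam / 2 * b j) * q.1 + (-2 * c * b j + I * lam / 2 * a j) * q.2)), hfin]
  refine Finset.prod_congr rfl fun j _ => ?_
  rw [integral_const_mul, gauss2 _ _ (by positivity) (by rw [hdet]; positivity), hdet, ← Complex.ofReal_mul]
  congr 1
  have := Real.pi_ne_zero
  field_simp
end
end

section
/- Let n ≥ 1 be an integer, t > 0 and λ a nonzero real number. Every monomial (z,w) ↦ z^α w^β (α, β ∈ ℕ₀^n) belongs to the twisted Fock space ℱ_t^λ(ℂ^{2n}), and the linear span of these monomials is dense in ℱ_t^λ(ℂ^{2n}) with respect to the norm ‖G‖² = ∫_{ℂ^{2n}} |G(z,w)|² 𝒲_t^λ(z,w) dz dw. -/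
open MeasureTheory Complex Filter Topology

noncomputable section

/-- The Fock-space weight
`𝒲_t^λ(z,w) = exp(λ·Im(z·w̄)) · exp(-(λ/2)·coth(2tλ)·(|z|²+|w|²))`. -/
def WF (n : ℕ) (t lam : ℝ) (z w : Fin n → ℂ) : ℝ :=
  Real.exp (lam * ∑ j, (z j * (starRingEnd ℂ) (w j)).im) *
    Real.exp (-(lam / 2) * cothR (2 * t * lam) * ((∑ j, ‖z j‖ ^ 2) + ∑ j, ‖w j‖ ^ 2))

/-- Membership in the twisted Fock space `ℱ_t^λ(ℂ^{2n})`: holomorphic and square-integrable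
against the weight `𝒲_t^λ`. -/
def FockMem (n : ℕ) (t lam : ℝ) (G : (Fin n → ℂ) × (Fin n → ℂ) → ℂ) : Prop :=
  Differentiable ℂ G ∧
    Integrable (fun q : (Fin n → ℂ) × (Fin n → ℂ) => ‖G q‖ ^ 2 * WF n t lam q.1 q.2) volume

/-- The monomial `(z,w) ↦ z^α w^β`. -/
def monomial (n : ℕ) (α β : Fin n → ℕ) : (Fin n → ℂ) × (Fin n → ℂ) → ℂ :=
  fun q => (∏ j, q.1 j ^ α j) * ∏ j, q.2 j ^ β j

lemma diff_param {X : Type*} [TopologicalSpace X] [CompactSpace X] [SecondCountableTopology X]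
    [MeasurableSpace X] [BorelSpace X]
    (μ : Measure X) [IsFiniteMeasure μ] (H : X → ℂ → ℂ) (hc : Continuous (Function.uncurry H))
    (hd : ∀ x, Differentiable ℂ (H x)) : Differentiable ℂ (fun s => ∫ x, H x s ∂μ) := by
  intro s₀
  have hcomp : IsCompact ((Set.univ : Set X) ×ˢ Metric.closedBall s₀ 2) :=
    isCompact_univ.prod (isCompact_closedBall _ _)
  obtain ⟨C, hC⟩ := hcomp.exists_bound_of_continuousOn hc.continuousOn
  have hcs : ∀ s, Continuous (fun x => H x s) := fun s => by
    exact hc.comp (Continuous.prodMk continuous_id continuous_const)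
  have key := hasDerivAt_integral_of_dominated_loc_of_deriv_le (μ := μ) (𝕜 := ℂ)
    (F := fun s x => H x s) (F' := fun s x => deriv (H x) s) (x₀ := s₀) (s := Metric.ball s₀ 1)
    (bound := fun _ => C) (Metric.ball_mem_nhds _ one_pos)
    (Eventually.of_forall fun s => (hcs s).aestronglyMeasurable)
    ?_ ?_ ?_ (integrable_const _) ?_
  · exact key.2.differentiableAt
  · refine Integrable.of_bound (hcs s₀).aestronglyMeasurable C (Eventually.of_forall fun x => ?_)
    exact hC (x, s₀) ⟨trivial, by simp⟩
  · have := (measurable_deriv_with_param hc)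
    exact (this.comp (measurable_prodMk_right (y := s₀))).aestronglyMeasurable
  · refine Eventually.of_forall fun x s hs => ?_
    have := norm_deriv_le_of_forall_mem_sphere_norm_le (C := C) (f := H x) (c := s) one_pos
      (hd x).diffContOnCl (fun z hz => hC (x, z) ⟨trivial, ?_⟩)
    · simpa using this
    · simp only [Metric.mem_sphere, Metric.mem_closedBall, Metric.mem_ball] at *
      linarith [dist_triangle z s s₀]
  · exact Eventually.of_forall fun x s hs => (hd x s).hasDerivAt

lemma liouville_poly (f : ℂ → ℂ) (hf : Differentiable ℂ f) (C : ℝ) (k : ℕ)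
    (hC : ∀ z, ‖f z‖ ≤ C * (1 + ‖z‖) ^ k) :
    ∃ p : Polynomial ℂ, p.degree < (k + 1 : ℕ) ∧ ∀ z, f z = p.eval z := by
  have hz : ∀ m, k < m → iteratedDeriv m f 0 = 0 := by
    intro m hm
    have hb : ∀ R : ℝ, 1 ≤ R → ‖iteratedDeriv m f 0‖ ≤ (m.factorial * (C * 2 ^ k)) * R⁻¹ := by
      intro R hR
      have hC0 : 0 ≤ C := by
        have := (norm_nonneg _).trans (hC 0)
        simpa using this
      have h1 := norm_iteratedDeriv_le_of_forall_mem_sphere_norm_le (C := C * (2 * R) ^ k)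
        (f := f) (c := 0) (R := R) m (by linarith) hf.diffContOnCl (fun z hz => by
          refine (hC z).trans ?_
          have : ‖z‖ = R := by simpa using hz
          rw [this]
          gcongr
          linarith)
      refine h1.trans ?_
      have hR0 : 0 < R := by linarith
      rw [div_le_iff₀ (by positivity)]
      have : R ^ k ≤ R⁻¹ * R ^ m := by
        obtain ⟨d, rfl⟩ := Nat.exists_eq_add_of_lt hm
        have : R⁻¹ * R ^ (k + d + 1) = R ^ k * R ^ d := by
          field_simp
          ring
        rw [this]
        exact le_mul_of_one_le_right (by positivity) (one_le_pow₀ hR)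
      rw [mul_pow]
      calc (m.factorial : ℝ) * (C * (2 ^ k * R ^ k)) = (m.factorial * (C * 2 ^ k)) * R ^ k := by ring
        _ ≤ (m.factorial * (C * 2 ^ k)) * (R⁻¹ * R ^ m) := by gcongr
        _ = _ := by ring
    have ht : Tendsto (fun R : ℝ => (m.factorial * (C * 2 ^ k)) * R⁻¹) atTop (𝓝 0) := by
      simpa using tendsto_inv_atTop_zero.const_mul (m.factorial * (C * 2 ^ k))
    have := ge_of_tendsto ht ((eventually_ge_atTop 1).mono hb)
    simpa using this
  refine ⟨∑ m ∈ Finset.range (k + 1),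
    Polynomial.monomial m ((m.factorial : ℂ)⁻¹ * iteratedDeriv m f 0), ?_, ?_⟩
  · refine (Polynomial.degree_sum_le _ _).trans_lt ?_
    rw [Finset.sup_lt_iff (WithBot.bot_lt_coe _)]
    intro m hm
    refine (Polynomial.degree_monomial_le _ _).trans_lt ?_
    exact_mod_cast Finset.mem_range.1 hm
  · intro z
    rw [← taylorSeries_eq_of_entire' 0 z hf, tsum_eq_sum (s := Finset.range (k + 1))]
    · simp [Polynomial.eval_finsetSum, Polynomial.eval_monomial]
    · intro m hm
      rw [hz m (by simpa using hm)]
      simp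

lemma multi_liouville {ι : Type*} [Fintype ι] [DecidableEq ι] (k : ℕ) (S : Finset ι) :
    ∀ (F : (ι → ℂ) → ℂ) (_ : ∀ x y, (∀ i ∈ S, x i = y i) → F x = F y)
    (_ : ∀ x i, Differentiable ℂ (fun s => F (Function.update x i s)))
    (C : ℝ) (_ : ∀ x, ‖F x‖ ≤ C * (1 + ‖x‖) ^ k),
    ∃ p : MvPolynomial ι ℂ, ∀ x, F x = MvPolynomial.eval x p := by
  induction S using Finset.induction_on with
  | empty =>
    intro F hF _ _ _
    exact ⟨MvPolynomial.C (F 0), fun x => by simpa using hF x 0 (by simp)⟩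
  | insert i S hi ih =>
    intro F hF hd C hC
    have hC0 : 0 ≤ C := by
      have := (norm_nonneg _).trans (hC 0)
      simpa using this
    have hup : ∀ (x : ι → ℂ) (s : ℂ), ‖Function.update x i s‖ ≤ ‖x‖ + ‖s‖ := by
      intro x s
      rw [pi_norm_le_iff_of_nonneg (by positivity)]
      intro j
      by_cases h : j = i
      · subst h; simp
      · rw [Function.update_of_ne h]
        linarith [norm_le_pi_norm x j, norm_nonneg s]
    have h1 : ∀ j : ℕ, ∃ p : MvPolynomial ι ℂ,
        ∀ x, F (Function.update x i (j : ℂ)) = MvPolynomial.eval x p := by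
      intro j
      refine ih (fun x => F (Function.update x i (j : ℂ))) ?_ ?_ (C * (1 + j) ^ k) ?_
      · intro x y hxy
        apply hF
        intro l hl
        by_cases h : l = i
        · subst h; simp
        · rw [Function.update_of_ne h, Function.update_of_ne h]
          exact hxy l (Finset.mem_of_mem_insert_of_ne hl h)
      · intro x l
        by_cases h : l = i
        · subst h
          simp
        · have := hd (Function.update x i (j : ℂ)) l
          simpa only [Function.update_comm h] using this
      · intro x
        refine (hC _).trans ?_
        rw [mul_assoc, ← mul_pow]
        gcongr
        have := hup x j
        rw [Complex.norm_natCast] at this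
        nlinarith [norm_nonneg x, (Nat.cast_nonneg j : (0 : ℝ) ≤ j)]
    choose P hP using h1
    have hinj : Set.InjOn (fun j : ℕ => (j : ℂ)) (Finset.range (k + 1) : Set ℕ) :=
      fun a _ b _ h => Nat.cast_injective (R := ℂ) h
    refine ⟨∑ j ∈ Finset.range (k + 1), P j *
      Polynomial.aeval (MvPolynomial.X i)
        (Lagrange.basis (Finset.range (k + 1)) (fun j : ℕ => (j : ℂ)) j), fun x => ?_⟩
    obtain ⟨p, hp, hpe⟩ := liouville_poly (fun s => F (Function.update x i s)) (hd x i)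
      (C * (1 + ‖x‖) ^ k) k (by
        intro s
        refine (hC _).trans ?_
        rw [mul_assoc, ← mul_pow]
        gcongr
        have := hup x s
        nlinarith [norm_nonneg x, norm_nonneg s])
    have h2 := Lagrange.eq_interpolate (s := Finset.range (k + 1)) (f := p) hinj
      (by simpa using hp)
    have h3 : F x = p.eval (x i) := by
      rw [← hpe]; simp
    rw [h3, h2, Lagrange.interpolate_apply, Polynomial.eval_finsetSum, map_sum]
    refine Finset.sum_congr rfl fun j _ => ?_
    rw [Polynomial.eval_mul, Polynomial.eval_C, map_mul, ← hP, ← hpe]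
    congr 1
    rw [Polynomial.aeval_def, MvPolynomial.algebraMap_eq, Polynomial.hom_eval₂]
    have hc : (MvPolynomial.eval x).comp MvPolynomial.C = RingHom.id ℂ := by
      ext; simp
    rw [hc, MvPolynomial.eval_X]
    rfl

lemma parseval_aux (b : ℕ → ℂ) (hb : Summable (fun k => ‖b k‖)) (f : C(UnitAddCircle, ℂ))
    (hf : ∀ θ, HasSum (fun k => b k * (fourier 1 θ) ^ k) (f θ)) :
    (∀ k : ℕ, b k = ∫ θ, fourier (-(k : ℤ)) θ * f θ ∂AddCircle.haarAddCircle) ∧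
    HasSum (fun k => ‖b k‖ ^ 2) (∫ θ, ‖f θ‖ ^ 2 ∂AddCircle.haarAddCircle) := by
  have hpow : ∀ (k : ℕ) (θ : UnitAddCircle), fourier (k : ℤ) θ = (fourier 1 θ) ^ k := by
    intro k θ
    induction k with
    | zero => simp
    | succ k ih => rw [Nat.cast_succ, fourier_add, ih, pow_succ]
  have hs : Summable (fun k : ℕ => b k • (fourier (k : ℤ) : C(UnitAddCircle, ℂ))) := by
    refine Summable.of_norm ?_
    simpa only [norm_smul, fourier_norm, mul_one] using hb
  have hS : HasSum (fun k : ℕ => b k • (fourier (k : ℤ) : C(UnitAddCircle, ℂ))) f := by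
    convert hs.hasSum
    ext θ
    have := hs.hasSum.map (ContinuousMap.evalCLM ℂ θ : C(UnitAddCircle, ℂ) →L[ℂ] ℂ)
      (ContinuousLinearMap.continuous _)
    refine (hf θ).unique ?_
    have h2 : (fun k => b k * (fourier 1 θ) ^ k) =
        ((ContinuousMap.evalCLM ℂ θ : C(UnitAddCircle, ℂ) →L[ℂ] ℂ) ∘
          fun k : ℕ => b k • (fourier (k : ℤ) : C(UnitAddCircle, ℂ))) := by
      ext k
      rw [← hpow]
      rfl
    rw [h2]
    exact this
  have hL := hS.map (ContinuousMap.toLp (E := ℂ) 2 (AddCircle.haarAddCircle (T := (1:ℝ))) ℂ)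
    (ContinuousLinearMap.continuous _)
  set x := (ContinuousMap.toLp (E := ℂ) 2 (AddCircle.haarAddCircle (T := (1:ℝ))) ℂ) f with hx
  have horth := orthonormal_fourier (T := (1 : ℝ))
  have hL' : HasSum (fun k : ℕ => b k • fourierLp (T := (1:ℝ)) 2 (k : ℤ)) x := by
    convert hL using 1
    ext1 k
    simp [fourierLp]
  have hcoef : ∀ j : ℕ, inner ℂ (fourierLp (T := (1:ℝ)) 2 (j : ℤ)) x = b j := by
    intro j
    have := hL'.map (innerSL ℂ (fourierLp (T := (1:ℝ)) 2 (j : ℤ))) (ContinuousLinearMap.continuous _)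
    refine (this.unique ?_)
    convert hasSum_single j ?_ using 1
    · simp [inner_smul_right, horth.1]
    · intro k hk
      have := horth.2 (i := (j : ℤ)) (j := (k : ℤ)) (by exact_mod_cast hk.symm)
      simp [inner_smul_right, this]
  constructor
  · intro k
    rw [← hcoef k, ContinuousMap.inner_toLp]
    refine integral_congr_ae (Eventually.of_forall fun θ => ?_)
    simp only [fourier_neg]
    ring
  · have h1 := hL'.map (innerSL ℂ x) (ContinuousLinearMap.continuous _)
    have h2 : inner ℂ x x = ((∫ θ, ‖f θ‖ ^ 2 ∂AddCircle.haarAddCircle : ℝ) : ℂ) := by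
      rw [hx, ContinuousMap.inner_toLp, ← integral_complex_ofReal]
      refine integral_congr_ae (Eventually.of_forall fun θ => ?_)
      simp [Complex.mul_conj']
    rw [innerSL_apply_apply, h2] at h1
    rw [← Complex.hasSum_ofReal]
    convert h1 using 1
    ext k
    simp only [Function.comp, innerSL_apply_apply, inner_smul_right]
    rw [← inner_conj_symm, hcoef, Complex.mul_conj']
    simp

/-- `k`-th homogeneous component. -/
def hcoeff {V : Type*} [NormedAddCommGroup V] [NormedSpace ℂ V] (G : V → ℂ) (k : ℕ) (q : V) : ℂ :=
  (k.factorial : ℂ)⁻¹ * iteratedDeriv k (fun ζ : ℂ => G (ζ • q)) 0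

section hc
variable {V : Type*} [NormedAddCommGroup V] [NormedSpace ℂ V] {G : V → ℂ}

lemma line_diff (hG : Differentiable ℂ G) (q : V) : Differentiable ℂ (fun ζ : ℂ => G (ζ • q)) :=
  hG.comp (by fun_prop)

lemma hc_hasSum (hG : Differentiable ℂ G) (q : V) (u : ℂ) :
    HasSum (fun k => hcoeff G k q * u ^ k) (G (u • q)) := by
  have := hasSum_taylorSeries_of_entire (line_diff hG q) 0 u
  refine this.congr_fun ?_
  intro k
  simp only [hcoeff, smul_eq_mul, sub_zero]
  ring

lemma hc_summable (hG : Differentiable ℂ G) (q : V) : Summable (fun k => ‖hcoeff G k q‖) := by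
  have := (hc_hasSum hG q 1).summable.norm
  simpa using this

lemma hc_homog (hG : Differentiable ℂ G) (k : ℕ) (c : ℂ) (q : V) :
    hcoeff G k (c • q) = c ^ k * hcoeff G k q := by
  have := iteratedDeriv_comp_const_smul (n := k) (line_diff hG q).contDiff c
  have h2 : (fun ζ : ℂ => G (ζ • c • q)) = fun ζ : ℂ => G ((c * ζ) • q) := by
    ext ζ; congr 1; rw [smul_smul, mul_comm]
  rw [hcoeff, h2, this]
  simp [hcoeff]
  ring

lemma hc_integral (hG : Differentiable ℂ G) (k : ℕ) (q : V) :
    hcoeff G k q = ∫ θ : UnitAddCircle, fourier (-(k : ℤ)) θ * G (fourier 1 θ • q)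
      ∂AddCircle.haarAddCircle := by
  have hcont := hG.continuous
  exact (parseval_aux (fun k => hcoeff G k q) (hc_summable hG q)
    ⟨fun θ => G (fourier 1 θ • q), by fun_prop⟩ (fun θ => hc_hasSum hG q _)).1 k

lemma hc_growth [ProperSpace V] (hG : Differentiable ℂ G) (k : ℕ) :
    ∃ C : ℝ, ∀ q, ‖hcoeff G k q‖ ≤ C * (1 + ‖q‖) ^ k := by
  obtain ⟨C, hC⟩ := (isCompact_closedBall (0 : V) 1).exists_bound_of_continuousOn
    hG.continuous.continuousOn
  have h1 : ∀ q : V, ‖q‖ ≤ 1 → ‖hcoeff G k q‖ ≤ C := by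
    intro q hq
    have := norm_iteratedDeriv_le_of_forall_mem_sphere_norm_le (C := C)
        (f := fun ζ : ℂ => G (ζ • q)) (c := 0) (R := 1) k one_pos (line_diff hG q).diffContOnCl
        (fun z hz => hC _ (by
          have : ‖z‖ = 1 := by simpa using hz
          simpa [norm_smul, this] using hq))
    rw [hcoeff, norm_mul, norm_inv, Complex.norm_natCast]
    have hf : (0 : ℝ) < k.factorial := by positivity
    rw [inv_mul_le_iff₀ hf]
    simpa using this
  refine ⟨C, fun q => ?_⟩
  have hr : (0 : ℝ) < 1 + ‖q‖ := by positivity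
  set r : ℂ := ((1 + ‖q‖ : ℝ) : ℂ) with hrdef
  have hr0 : r ≠ 0 := by rw [hrdef]; exact_mod_cast hr.ne'
  have hrn : ‖r‖ = 1 + ‖q‖ := by rw [hrdef, Complex.norm_real, Real.norm_of_nonneg hr.le]
  have h2 : q = r • (r⁻¹ • q) := by rw [smul_smul, mul_inv_cancel₀ hr0, one_smul]
  have h3 : ‖r⁻¹ • q‖ ≤ 1 := by
    rw [norm_smul, norm_inv, hrn, inv_mul_le_iff₀ hr]
    linarith
  rw [h2, hc_homog hG, norm_mul, norm_pow, hrn, ← h2, mul_comm]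
  gcongr
  exact h1 _ h3

end hc

abbrev VV (n : ℕ) := (Fin n → ℂ) × (Fin n → ℂ)

lemma hc_mem_span (n : ℕ) (G : VV n → ℂ) (hG : Differentiable ℂ G) (k : ℕ) :
    hcoeff G k ∈ Submodule.span ℂ {g : VV n → ℂ | ∃ α β : Fin n → ℕ, g = monomial n α β} := by
  obtain ⟨C, hC⟩ := hc_growth hG k
  have hcont := hG.continuous
  have hC0 : 0 ≤ C := by
    have := (norm_nonneg _).trans (hC 0)
    simpa using this
  obtain ⟨p, hp⟩ := multi_liouville (ι := Fin n ⊕ Fin n) k Finset.univ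
    (fun x => hcoeff G k (x ∘ Sum.inl, x ∘ Sum.inr)) (fun x y h => by
      have : x = y := funext fun i => h i (Finset.mem_univ _)
      rw [this]) (by
      intro x i
      simp only [hc_integral hG]
      have h1 : Differentiable ℂ (fun s : ℂ => Function.update x i s) := by
        rw [differentiable_pi]
        intro j
        by_cases h : j = i
        · subst h; simp
        · simp [Function.update_of_ne h]
      have h2 : Differentiable ℂ (fun s : ℂ => (((Function.update x i s) ∘ Sum.inl,
          (Function.update x i s) ∘ Sum.inr) : VV n)) := by
        rw [differentiable_pi] at h1
        refine Differentiable.prodMk ?_ ?_ <;> rw [differentiable_pi] <;> intro j <;> exact h1 _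
      refine diff_param _ (fun (θ : UnitAddCircle) s => fourier (-(k : ℤ)) θ *
        G (fourier 1 θ • ((Function.update x i s) ∘ Sum.inl, (Function.update x i s) ∘ Sum.inr))) ?_ ?_
      · have := h2.continuous
        unfold Function.uncurry
        have h5 : Continuous (fun p : UnitAddCircle × ℂ => fourier 1 p.1 •
            (((Function.update x i p.2) ∘ Sum.inl, (Function.update x i p.2) ∘ Sum.inr) : VV n)) :=
          Continuous.smul ((fourier 1).continuous.comp continuous_fst) (this.comp continuous_snd)
        exact Continuous.mul ((fourier _).continuous.comp continuous_fst) (hcont.comp h5)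
      · intro θ
        exact (hG.comp (h2.const_smul (fourier 1 θ))).const_mul (fourier (-(k : ℤ)) θ)) C (by
      intro x
      refine (hC _).trans ?_
      gcongr
      rw [Prod.norm_def]
      refine max_le ?_ ?_ <;> refine (pi_norm_le_iff_of_nonneg (norm_nonneg _)).2 fun j => ?_
      · exact norm_le_pi_norm x _
      · exact norm_le_pi_norm x _)
  have : hcoeff G k = ∑ d ∈ p.support,
      (MvPolynomial.coeff d p) • monomial n (fun j => d (Sum.inl j)) (fun j => d (Sum.inr j)) := by
    ext q
    have := hp (Sum.elim q.1 q.2)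
    simp only [Sum.elim_comp_inl, Sum.elim_comp_inr, Prod.mk.eta] at this
    rw [this, MvPolynomial.eval_eq']
    simp [monomial, Fintype.prod_sum_type]
  rw [this]
  exact Submodule.sum_mem _ fun d _ => Submodule.smul_mem _ _ (Submodule.subset_span ⟨_, _, rfl⟩)

lemma rot_mp (n : ℕ) (u : ℂ) (hu : ‖u‖ = 1) :
    MeasurePreserving (fun q : VV n => u • q) volume volume := by
  have h1 : MeasurePreserving (fun z : ℂ => u * z) volume volume :=
    (rotation (⟨u, by simpa [Submonoid.unitSphere] using hu⟩ : Circle)).measurePreserving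
  have h2 : MeasurePreserving (fun (z : Fin n → ℂ) i => u * z i) volume volume :=
    volume_preserving_pi (fun _ => h1)
  exact h2.prod h2

lemma WF_rot (n : ℕ) (t lam : ℝ) (u : ℂ) (hu : ‖u‖ = 1) (z w : Fin n → ℂ) :
    WF n t lam (u • z) (u • w) = WF n t lam z w := by
  have h : ∀ j, (u • z) j * (starRingEnd ℂ) ((u • w) j) = z j * (starRingEnd ℂ) (w j) := by
    intro j
    have : u * (starRingEnd ℂ) u = 1 := by rw [Complex.mul_conj', hu]; simp
    simp only [Pi.smul_apply, smul_eq_mul, map_mul]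
    linear_combination (z j * (starRingEnd ℂ) (w j)) * this
  have h2 : ∀ (z : Fin n → ℂ) j, ‖(u • z) j‖ = ‖z j‖ := by
    intro z j
    simp [hu]
  simp only [WF, h, h2]

lemma WF_cont (n : ℕ) (t lam : ℝ) : Continuous (fun q : VV n => WF n t lam q.1 q.2) := by
  unfold WF
  fun_prop

lemma WF_nonneg (n : ℕ) (t lam : ℝ) (z w) : 0 ≤ WF n t lam z w := by
  unfold WF
  positivity

lemma fourier_one_norm (θ : UnitAddCircle) : ‖fourier 1 θ‖ = 1 := by
  rw [fourier_one]
  exact Circle.norm_coe _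

lemma norm_id (n : ℕ) (t lam : ℝ) (D : VV n → ℂ) (hD : Continuous D) (b : ℕ → VV n → ℂ)
    (hb : ∀ k, Continuous (b k)) (hs : ∀ q, Summable (fun k => ‖b k q‖))
    (hsum : ∀ q u, ‖u‖ = 1 → HasSum (fun k => b k q * u ^ k) (D (u • q))) :
    ∫⁻ q, ENNReal.ofReal (‖D q‖ ^ 2 * WF n t lam q.1 q.2) =
      ∑' k, ∫⁻ q, ENNReal.ofReal (‖b k q‖ ^ 2 * WF n t lam q.1 q.2) := by
  have hW := WF_cont n t lam
  have hW0 := WF_nonneg n t lam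
  have step1 : ∀ θ : UnitAddCircle, ∫⁻ q, ENNReal.ofReal (‖D q‖ ^ 2 * WF n t lam q.1 q.2) =
      ∫⁻ q : VV n, ENNReal.ofReal (‖D (fourier 1 θ • q)‖ ^ 2 * WF n t lam q.1 q.2) := by
    intro θ
    rw [← (rot_mp n _ (fourier_one_norm θ)).lintegral_comp (by fun_prop)]
    refine lintegral_congr fun q => ?_
    simp only [Prod.smul_fst, Prod.smul_snd, WF_rot n t lam _ (fourier_one_norm θ)]
  have step2 : ∫⁻ q, ENNReal.ofReal (‖D q‖ ^ 2 * WF n t lam q.1 q.2) =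
      ∫⁻ θ : UnitAddCircle, ∫⁻ q : VV n,
        ENNReal.ofReal (‖D (fourier 1 θ • q)‖ ^ 2 * WF n t lam q.1 q.2) ∂volume
          ∂AddCircle.haarAddCircle := by
    rw [← lintegral_congr step1]
    simp
  rw [step2, lintegral_lintegral_swap, ← lintegral_tsum]
  · refine lintegral_congr fun q => ?_
    have hp := (parseval_aux (fun k => b k q) (hs q) ⟨fun θ => D (fourier 1 θ • q), by fun_prop⟩
      (fun θ => hsum q _ (fourier_one_norm θ))).2
    simp only [ContinuousMap.coe_mk] at hp
    simp only [ENNReal.ofReal_mul (sq_nonneg _)]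
    rw [ENNReal.tsum_mul_right, lintegral_mul_const _ (by fun_prop)]
    congr 1
    rw [← ENNReal.ofReal_tsum_of_nonneg (fun _ => sq_nonneg _) hp.summable, hp.tsum_eq,
      ofReal_integral_eq_lintegral_ofReal]
    · refine Continuous.integrable_of_hasCompactSupport (by fun_prop) ?_
      exact HasCompactSupport.of_compactSpace _
    · exact Eventually.of_forall fun _ => sq_nonneg _
  · intro k
    have := hb k
    fun_prop
  · refine Continuous.aemeasurable ?_
    unfold Function.uncurry
    refine ENNReal.continuous_ofReal.comp ?_
    fun_prop

lemma mono_cont (n : ℕ) (α β : Fin n → ℕ) : Differentiable ℂ (monomial n α β) := by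
  unfold monomial
  fun_prop

lemma dense_part (n : ℕ) (t lam : ℝ) (G : VV n → ℂ) (hG : FockMem n t lam G) (ε : ℝ) (hε : 0 < ε) :
    ∃ P ∈ Submodule.span ℂ {g : (Fin n → ℂ) × (Fin n → ℂ) → ℂ |
          ∃ α β : Fin n → ℕ, g = monomial n α β},
        ∫ q : (Fin n → ℂ) × (Fin n → ℂ), ‖G q - P q‖ ^ 2 * WF n t lam q.1 q.2 < ε := by
  obtain ⟨hd, hi⟩ := hG
  have hW := WF_cont n t lam
  have hW0 := WF_nonneg n t lam
  have hcont : ∀ k, Continuous (hcoeff G k) := by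
    intro k
    refine Submodule.span_induction (p := fun g _ => Continuous g) ?_ ?_ ?_ ?_ (hc_mem_span n G hd k)
    · rintro g ⟨α, β, rfl⟩
      exact (mono_cont n α β).continuous
    · exact continuous_const
    · intro x y _ _ hx hy
      exact hx.add hy
    · intro a x _ hx
      exact hx.const_smul a
  have h0 := norm_id n t lam G hd.continuous (hcoeff G) hcont (hc_summable hd)
    (fun q u _ => hc_hasSum hd q u)
  set c : ℕ → ENNReal := fun k => ∫⁻ q, ENNReal.ofReal (‖hcoeff G k q‖ ^ 2 * WF n t lam q.1 q.2)
    with hc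
  have hfin : ∑' k, c k ≠ ⊤ := by
    rw [← h0]
    exact hi.lintegral_lt_top.ne
  have htend := ENNReal.tendsto_sum_nat_add c hfin
  obtain ⟨N, hN⟩ := (htend.eventually (gt_mem_nhds (ENNReal.ofReal_pos.2 hε))).exists
  refine ⟨∑ k ∈ Finset.range N, hcoeff G k,
    Submodule.sum_mem _ fun k _ => hc_mem_span n G hd k, ?_⟩
  have hcP : Continuous (∑ k ∈ Finset.range N, hcoeff G k) := by
    have : Continuous (fun q => ∑ k ∈ Finset.range N, hcoeff G k q) :=
      continuous_finsetSum _ fun k _ => hcont k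
    convert this using 1
    ext q; simp
  have h1 := norm_id n t lam (fun q => G q - (∑ k ∈ Finset.range N, hcoeff G k) q)
    (hd.continuous.sub hcP) (fun k => if k < N then fun _ => 0 else hcoeff G k)
    (fun k => by split_ifs; exacts [continuous_const, hcont k])
    (fun q => by
      refine Summable.of_nonneg_of_le (fun _ => norm_nonneg _) (fun k => ?_) (hc_summable hd q)
      split_ifs <;> simp)
    (fun q u hu => by
      have hA := hc_hasSum hd q u
      have hB : HasSum (fun k => if k < N then hcoeff G k q * u ^ k else 0)
          ((∑ k ∈ Finset.range N, hcoeff G k) (u • q)) := by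
        have : (∑ k ∈ Finset.range N, hcoeff G k) (u • q) =
            ∑ k ∈ Finset.range N, (if k < N then hcoeff G k q * u ^ k else 0) := by
          rw [Finset.sum_apply]
          refine Finset.sum_congr rfl fun k hk => ?_
          rw [if_pos (Finset.mem_range.1 hk), hc_homog hd, mul_comm]
        rw [this]
        refine hasSum_sum_of_ne_finset_zero fun k hk => ?_
        rw [if_neg (by simpa using hk)]
      refine (hA.sub hB).congr_fun ?_
      intro k
      split_ifs <;> simp)
  rw [integral_eq_lintegral_of_nonneg_ae]
  · rw [h1]
    have h2 : (∑' k, ∫⁻ q : VV n, ENNReal.ofReal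
        (‖(if k < N then fun _ => 0 else hcoeff G k) q‖ ^ 2 * WF n t lam q.1 q.2)) =
        ∑' k, c (k + N) := by
      rw [← ENNReal.summable.sum_add_tsum_nat_add' (k := N), Finset.sum_eq_zero, zero_add]
      · simp [hc]
      · intro k hk
        simp [Finset.mem_range.1 hk]
    rw [h2]
    exact (ENNReal.lt_ofReal_iff_toReal_lt hN.ne_top).1 hN
  · exact Eventually.of_forall fun q => mul_nonneg (sq_nonneg _) (hW0 _ _)
  · have := hd.continuous
    refine Continuous.aestronglyMeasurable ?_
    fun_prop

lemma gauss_int (a : ℕ) (δ : ℝ) (hδ : 0 < δ) :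
    Integrable (fun z : ℂ => (‖z‖ ^ a) ^ 2 * Real.exp (-δ * ‖z‖ ^ 2)) := by
  have h0 : Integrable (fun z : ℂ => Real.exp (-(δ / 2) * ‖z‖ ^ 2)) := by
    have := (GaussianFourier.integrable_cexp_neg_mul_sq_norm_add (V := ℂ) (b := ((δ / 2 : ℝ) : ℂ))
      (by simpa using hδ) 0 0).norm
    refine this.congr (Eventually.of_forall fun z => ?_)
    simp only [Complex.norm_exp]
    congr 1
    simp [← Complex.ofReal_pow]
  refine (h0.const_mul (a.factorial * (2 / δ) ^ a)).mono' (by fun_prop)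
    (Eventually.of_forall fun z => ?_)
  rw [Real.norm_of_nonneg (by positivity)]
  have h1 := Real.pow_div_factorial_le_exp (δ / 2 * ‖z‖ ^ 2) (by positivity) a
  have h2 : Real.exp (-δ * ‖z‖ ^ 2) = Real.exp (-(δ / 2) * ‖z‖ ^ 2) *
      Real.exp (-(δ / 2 * ‖z‖ ^ 2)) := by
    rw [← Real.exp_add]; congr 1; ring
  have h3 : (‖z‖ ^ a) ^ 2 ≤ a.factorial * (2 / δ) ^ a * Real.exp (δ / 2 * ‖z‖ ^ 2) := by
    rw [div_le_iff₀ (by positivity), mul_pow] at h1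
    calc (‖z‖ ^ a) ^ 2 = (2 / δ) ^ a * ((δ / 2) ^ a * (‖z‖ ^ 2) ^ a) := by
          rw [← mul_assoc, ← mul_pow, ← pow_mul, ← pow_mul, mul_comm a 2]
          have : 2 / δ * (δ / 2) = 1 := by field_simp
          rw [this]; simp
      _ ≤ (2 / δ) ^ a * (Real.exp (δ / 2 * ‖z‖ ^ 2) * a.factorial) := by gcongr
      _ = _ := by ring
  rw [h2]
  calc _ ≤ (a.factorial * (2 / δ) ^ a * Real.exp (δ / 2 * ‖z‖ ^ 2)) *
        (Real.exp (-(δ / 2) * ‖z‖ ^ 2) * Real.exp (-(δ / 2 * ‖z‖ ^ 2))) := by gcongr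
    _ = (a.factorial * (2 / δ) ^ a * Real.exp (-(δ / 2) * ‖z‖ ^ 2)) *
        (Real.exp (δ / 2 * ‖z‖ ^ 2) * Real.exp (-(δ / 2 * ‖z‖ ^ 2))) := by ring
    _ = _ := by rw [← Real.exp_add]; simp

lemma coth_bound (t lam : ℝ) (ht : 0 < t) (hlam : lam ≠ 0) :
    |lam| / 2 < (lam / 2) * cothR (2 * t * lam) := by
  unfold cothR
  rcases lt_or_gt_of_ne hlam with h | h
  · have hs : Real.sinh (2 * t * lam) < 0 := Real.sinh_neg_iff.2 (by nlinarith)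
    have : Real.cosh (2 * t * lam) / Real.sinh (2 * t * lam) < -1 := by
      rw [div_lt_iff_of_neg hs]
      have := Real.cosh_add_sinh (2 * t * lam)
      linarith [Real.exp_pos (2 * t * lam)]
    rw [abs_of_neg h]
    nlinarith
  · have hs : 0 < Real.sinh (2 * t * lam) := Real.sinh_pos_iff.2 (by positivity)
    have : 1 < Real.cosh (2 * t * lam) / Real.sinh (2 * t * lam) := by
      rw [lt_div_iff₀ hs]
      have := Real.cosh_sub_sinh (2 * t * lam)
      linarith [Real.exp_pos (-(2 * t * lam))]
    rw [abs_of_pos h]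
    nlinarith

lemma WF_le (n : ℕ) (t lam : ℝ) (z w : Fin n → ℂ) :
    WF n t lam z w ≤ Real.exp (-((lam / 2) * cothR (2 * t * lam) - |lam| / 2) *
      ((∑ j, ‖z j‖ ^ 2) + ∑ j, ‖w j‖ ^ 2)) := by
  unfold WF
  rw [← Real.exp_add, Real.exp_le_exp]
  have : lam * ∑ j, (z j * (starRingEnd ℂ) (w j)).im ≤
      |lam| / 2 * ((∑ j, ‖z j‖ ^ 2) + ∑ j, ‖w j‖ ^ 2) := by
    rw [← Finset.sum_add_distrib, Finset.mul_sum, Finset.mul_sum]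
    refine Finset.sum_le_sum fun j _ => ?_
    have h1 : |(z j * (starRingEnd ℂ) (w j)).im| ≤ ‖z j‖ * ‖w j‖ := by
      refine (Complex.abs_im_le_norm _).trans ?_
      simp
    calc _ ≤ |lam * (z j * (starRingEnd ℂ) (w j)).im| := le_abs_self _
      _ = |lam| * |(z j * (starRingEnd ℂ) (w j)).im| := abs_mul _ _
      _ ≤ |lam| * (‖z j‖ * ‖w j‖) := by gcongr
      _ ≤ _ := by nlinarith [abs_nonneg lam, sq_nonneg (‖z j‖ - ‖w j‖)]
  linarith

lemma mem_part (n : ℕ) (t lam : ℝ) (ht : 0 < t) (hlam : lam ≠ 0) (α β : Fin n → ℕ) :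
    FockMem n t lam (monomial n α β) := by
  refine ⟨mono_cont n α β, ?_⟩
  have hδ := coth_bound t lam ht hlam
  set δ := (lam / 2) * cothR (2 * t * lam) - |lam| / 2 with hδd
  have hδ0 : 0 < δ := by rw [hδd]; linarith
  have h1 : ∀ α : Fin n → ℕ, Integrable (fun z : Fin n → ℂ =>
      ∏ j, ((‖z j‖ ^ α j) ^ 2 * Real.exp (-δ * ‖z j‖ ^ 2))) := fun α =>
    Integrable.fintype_prod (f := fun j (z : ℂ) => (‖z‖ ^ α j) ^ 2 * Real.exp (-δ * ‖z‖ ^ 2))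
      fun j => gauss_int (α j) δ hδ0
  refine ((h1 α).mul_prod (h1 β)).mono' ?_ (Eventually.of_forall fun q => ?_)
  · have h1 := WF_cont n t lam
    have h2 := (mono_cont n α β).continuous
    refine Continuous.aestronglyMeasurable ?_
    fun_prop
  · rw [Real.norm_of_nonneg (mul_nonneg (sq_nonneg _) (WF_nonneg _ _ _ _ _))]
    refine (mul_le_mul_of_nonneg_left (WF_le n t lam q.1 q.2) (sq_nonneg _)).trans (le_of_eq ?_)
    rw [← hδd, mul_add, Real.exp_add, Finset.mul_sum, Finset.mul_sum, Real.exp_sum, Real.exp_sum,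
      Finset.prod_mul_distrib, Finset.prod_mul_distrib, monomial, norm_mul, norm_prod, norm_prod,
      Finset.prod_pow, Finset.prod_pow]
    simp only [norm_pow]
    ring

/-- Every monomial `(z,w) ↦ z^α w^β` belongs to the twisted Fock space
`ℱ_t^λ(ℂ^{2n})`, and the linear span of the monomials is dense in `ℱ_t^λ(ℂ^{2n})` with respect
to the weighted `L²` norm. -/
theorem monomials_dense_in_twisted_Fock
    (n : ℕ) (hn : 1 ≤ n) (t lam : ℝ) (ht : 0 < t) (hlam : lam ≠ 0) :
    (∀ α β : Fin n → ℕ, FockMem n t lam (monomial n α β)) ∧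
    (∀ G : (Fin n → ℂ) × (Fin n → ℂ) → ℂ, FockMem n t lam G → ∀ ε : ℝ, 0 < ε →
      ∃ P ∈ Submodule.span ℂ {g : (Fin n → ℂ) × (Fin n → ℂ) → ℂ |
          ∃ α β : Fin n → ℕ, g = monomial n α β},
        ∫ q : (Fin n → ℂ) × (Fin n → ℂ), ‖G q - P q‖ ^ 2 * WF n t lam q.1 q.2 < ε) := by
  exact ⟨fun α β => mem_part n t lam ht hlam α β, fun G hG ε hε => dense_part n t lam G hG ε hε⟩
end
end

section
/- Let n ≥ 1 be an integer, t > 0 and λ a nonzero real number. Suppose U : ℂ^{2n} → [0,∞) is measurable and, for all F, G ∈ ℱ_t^λ(ℂ^{2n}), the function F·conj(G)·U is Lebesgue-integrable on ℂ^{2n} and ∫_{ℂ^{2n}} F(z,w) conj(G(z,w)) 𝒲_t^λ(z,w) dz dw = ∫_{ℂ^{2n}} F(z,w) conj(G(z,w)) U(z,w) dz dw. Then U = 𝒲_t^λ almost everywhere; i.e. the non-negative weight function of the twisted Fock space is unique. -/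
open MeasureTheory Complex Filter Topology

noncomputable section

lemma fock_aux_coth (t lam : ℝ) (ht : 0 < t) (hlam : lam ≠ 0) :
    |lam| < lam * cothR (2 * t * lam) := by
  unfold cothR
  rcases lt_or_gt_of_ne hlam with h | h
  · have hx : 2 * t * lam < 0 := by nlinarith
    have hs : Real.sinh (2 * t * lam) < 0 := Real.sinh_neg_iff.2 hx
    have h1 : Real.cosh (2 * t * lam) / Real.sinh (2 * t * lam) < -1 := by
      rw [div_lt_iff_of_neg hs]
      have := Real.cosh_add_sinh (2 * t * lam)
      have := Real.exp_pos (2 * t * lam)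
      linarith
    rw [abs_of_neg h]
    nlinarith
  · have hx : 0 < 2 * t * lam := by positivity
    have hs : 0 < Real.sinh (2 * t * lam) := Real.sinh_pos_iff.2 hx
    have h1 : 1 < Real.cosh (2 * t * lam) / Real.sinh (2 * t * lam) := by
      rw [lt_div_iff₀ hs]
      have := Real.sinh_lt_cosh (2 * t * lam)
      linarith
    rw [abs_of_pos h]
    nlinarith

lemma fock_aux_gauss (n : ℕ) (c : ℝ) (hc : 0 < c) :
    Integrable (fun q : (Fin n → ℂ) × (Fin n → ℂ) =>
      Real.exp (-c * ((∑ j, ‖q.1 j‖ ^ 2) + ∑ j, ‖q.2 j‖ ^ 2))) volume := by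
  have h0 : Integrable (fun z : ℂ => Real.exp (-c * ‖z‖ ^ 2)) volume := by
    have := (GaussianFourier.integrable_cexp_neg_mul_sq_norm_add (V := ℂ) (b := (c : ℂ))
      (by simpa using hc) 0 0).norm
    refine this.congr (ae_of_all _ fun z => ?_)
    simp only [Complex.norm_exp]
    congr 1
    simp [← Complex.ofReal_pow]
  have h1 : Integrable (fun z : Fin n → ℂ => ∏ j, Real.exp (-c * ‖z j‖ ^ 2)) volume :=
    Integrable.fintype_prod (f := fun _ (z : ℂ) => Real.exp (-c * ‖z‖ ^ 2)) (fun _ => h0)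
  have h2 := h1.mul_prod h1
  rw [← Measure.volume_eq_prod] at h2
  refine h2.congr (ae_of_all _ fun q => ?_)
  simp only [← Real.exp_sum, ← Real.exp_add, Finset.mul_sum, mul_add]

lemma fock_aux_WF (n : ℕ) (t lam : ℝ) (z w : Fin n → ℂ) :
    WF n t lam z w ≤ Real.exp (-((lam * cothR (2 * t * lam) - |lam|) / 2) *
      ((∑ j, ‖z j‖ ^ 2) + ∑ j, ‖w j‖ ^ 2)) := by
  unfold WF
  rw [← Real.exp_add, Real.exp_le_exp]
  have h : lam * ∑ j, (z j * (starRingEnd ℂ) (w j)).im ≤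
      |lam| / 2 * ((∑ j, ‖z j‖ ^ 2) + ∑ j, ‖w j‖ ^ 2) := by
    rw [← Finset.sum_add_distrib, Finset.mul_sum, Finset.mul_sum]
    refine Finset.sum_le_sum fun j _ => ?_
    have h1 : |(z j * (starRingEnd ℂ) (w j)).im| ≤ ‖z j‖ * ‖w j‖ := by
      refine (Complex.abs_im_le_norm _).trans ?_
      simp
    have h2 : lam * (z j * (starRingEnd ℂ) (w j)).im ≤ |lam| * (‖z j‖ * ‖w j‖) := by
      refine (le_abs_self _).trans ?_
      rw [abs_mul]
      gcongr
    nlinarith [mul_nonneg (abs_nonneg lam) (sq_nonneg (‖z j‖ - ‖w j‖))]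
  linarith

lemma fock_aux_norm (n : ℕ) (q : (Fin n → ℂ) × (Fin n → ℂ)) :
    ‖q‖ ^ 2 ≤ (∑ j, ‖q.1 j‖ ^ 2) + ∑ j, ‖q.2 j‖ ^ 2 := by
  have key : ∀ v : Fin n → ℂ, ‖v‖ ^ 2 ≤ ∑ j, ‖v j‖ ^ 2 := by
    intro v
    have : ‖v‖ ≤ Real.sqrt (∑ j, ‖v j‖ ^ 2) := by
      rw [pi_norm_le_iff_of_nonneg (Real.sqrt_nonneg _)]
      intro i
      apply Real.le_sqrt_of_sq_le
      exact Finset.single_le_sum (f := fun j => ‖v j‖ ^ 2) (fun _ _ => by positivity)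
        (Finset.mem_univ i)
    exact (Real.le_sqrt (norm_nonneg _) (by positivity)).1 this
  have h1 := key q.1
  have h2 := key q.2
  have h3 : 0 ≤ ∑ j, ‖q.1 j‖ ^ 2 := by positivity
  have h4 : 0 ≤ ∑ j, ‖q.2 j‖ ^ 2 := by positivity
  rw [Prod.norm_def]
  rcases max_cases ‖q.1‖ ‖q.2‖ with h | h <;> rw [h.1] <;> linarith

lemma fock_aux_cont (n : ℕ) (t lam : ℝ) :
    Continuous (fun q : (Fin n → ℂ) × (Fin n → ℂ) => WF n t lam q.1 q.2) := by
  unfold WF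
  have h : Continuous (fun q : (Fin n → ℂ) × (Fin n → ℂ) =>
      ∑ j, (q.1 j * (starRingEnd ℂ) (q.2 j)).im) := by
    refine continuous_finsetSum _ fun j _ => ?_
    refine Complex.continuous_im.comp (Continuous.mul (by fun_prop) ?_)
    exact Complex.continuous_conj.comp (by fun_prop)
  fun_prop

lemma fock_aux_exp (n : ℕ) (t lam : ℝ) (ht : 0 < t) (hlam : lam ≠ 0)
    (A : ((Fin n → ℂ) × (Fin n → ℂ)) →L[ℂ] ℂ) :
    FockMem n t lam (fun q => Complex.exp (A q)) := by
  refine ⟨A.differentiable.cexp, ?_⟩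
  have hc := fock_aux_coth t lam ht hlam
  set c := (lam * cothR (2 * t * lam) - |lam|) / 2 with hcdef
  have hc0 : 0 < c := by rw [hcdef]; linarith
  refine Integrable.mono' ((fock_aux_gauss n (c / 2) (by linarith)).const_mul
    (Real.exp (2 * ‖A‖ ^ 2 / c))) ?_ (ae_of_all _ fun q => ?_)
  · have := fock_aux_cont n t lam
    have hA := A.continuous
    exact Continuous.aestronglyMeasurable (by fun_prop)
  · have hW0 : 0 ≤ WF n t lam q.1 q.2 := by unfold WF; positivity
    rw [Real.norm_of_nonneg (by positivity)]
    have hW := fock_aux_WF n t lam q.1 q.2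
    rw [← hcdef] at hW
    have hN := fock_aux_norm n q
    set S := (∑ j, ‖q.1 j‖ ^ 2) + ∑ j, ‖q.2 j‖ ^ 2
    have hE : ‖Complex.exp (A q)‖ ^ 2 ≤ Real.exp (2 * (‖A‖ * ‖q‖)) := by
      rw [Complex.norm_exp, ← Real.exp_nat_mul, Real.exp_le_exp]
      have := (Complex.re_le_norm (A q)).trans (A.le_opNorm q)
      push_cast
      linarith
    refine (mul_le_mul hE hW hW0 (Real.exp_pos _).le).trans ?_
    rw [← Real.exp_add, ← Real.exp_add, Real.exp_le_exp]
    have h5 : 2 * (‖A‖ * ‖q‖) ≤ 2 * ‖A‖ ^ 2 / c + c / 2 * ‖q‖ ^ 2 := by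
      have : 2 * ‖A‖ ^ 2 / c + c / 2 * ‖q‖ ^ 2 - 2 * (‖A‖ * ‖q‖)
          = (2 * ‖A‖ - c * ‖q‖) ^ 2 / (2 * c) := by
        field_simp
        ring
      have h6 : 0 ≤ (2 * ‖A‖ - c * ‖q‖) ^ 2 / (2 * c) := by positivity
      linarith
    nlinarith [mul_le_mul_of_nonneg_left hN (half_pos hc0).le]

/-- The non-negative weight function of the twisted Fock space is unique:
if a non-negative measurable `U` reproduces all the inner products of `ℱ_t^λ(ℂ^{2n})`, then
`U = 𝒲_t^λ` almost everywhere. -/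
theorem Fock_weight_unique
    (n : ℕ) (hn : 1 ≤ n) (t lam : ℝ) (ht : 0 < t) (hlam : lam ≠ 0)
    (U : (Fin n → ℂ) × (Fin n → ℂ) → ℝ)
    (hUmeas : Measurable U) (hUnonneg : ∀ q, 0 ≤ U q)
    (hInt : ∀ F G : (Fin n → ℂ) × (Fin n → ℂ) → ℂ, FockMem n t lam F → FockMem n t lam G →
      Integrable (fun q : (Fin n → ℂ) × (Fin n → ℂ) =>
        F q * (starRingEnd ℂ) (G q) * (U q : ℂ)) volume)
    (hEq : ∀ F G : (Fin n → ℂ) × (Fin n → ℂ) → ℂ, FockMem n t lam F → FockMem n t lam G →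
      (∫ q : (Fin n → ℂ) × (Fin n → ℂ),
          F q * (starRingEnd ℂ) (G q) * (WF n t lam q.1 q.2 : ℂ))
        = ∫ q : (Fin n → ℂ) × (Fin n → ℂ), F q * (starRingEnd ℂ) (G q) * (U q : ℂ)) :
    U =ᵐ[volume] fun q : (Fin n → ℂ) × (Fin n → ℂ) => WF n t lam q.1 q.2 := by
  have hWc := fock_aux_cont n t lam
  have hW0 : ∀ q : (Fin n → ℂ) × (Fin n → ℂ), 0 ≤ WF n t lam q.1 q.2 := fun q => by
    unfold WF; positivity
  have h1 : FockMem n t lam (fun _ => 1) := by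
    simpa using fock_aux_exp n t lam ht hlam 0
  have hWi : Integrable (fun q : (Fin n → ℂ) × (Fin n → ℂ) => WF n t lam q.1 q.2) volume := by
    simpa using h1.2
  have hUi : Integrable U volume := by
    have := (hInt _ _ h1 h1).re
    simpa using this
  have hfU : IsFiniteMeasure (volume.withDensity fun q => ENNReal.ofReal (U q)) :=
    isFiniteMeasure_withDensity_ofReal hUi.2
  have hfW : IsFiniteMeasure ((volume : Measure ((Fin n → ℂ) × (Fin n → ℂ))).withDensity
      fun q => ENNReal.ofReal (WF n t lam q.1 q.2)) :=
    isFiniteMeasure_withDensity_ofReal hWi.2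
  have hmU : Measurable fun q => ENNReal.ofReal (U q) := hUmeas.ennreal_ofReal
  have hmW : Measurable fun q : (Fin n → ℂ) × (Fin n → ℂ) =>
      ENNReal.ofReal (WF n t lam q.1 q.2) := hWc.measurable.ennreal_ofReal
  have hmeas : (volume.withDensity fun q => ENNReal.ofReal (U q)) =
      (volume : Measure ((Fin n → ℂ) × (Fin n → ℂ))).withDensity
      fun q => ENNReal.ofReal (WF n t lam q.1 q.2) := by
    apply Measure.ext_of_charFunDual
    ext L
    rw [charFunDual_apply, charFunDual_apply,
      integral_withDensity_eq_integral_toReal_smul hmU (ae_of_all _ fun _ => ENNReal.ofReal_lt_top),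
      integral_withDensity_eq_integral_toReal_smul hmW (ae_of_all _ fun _ => ENNReal.ofReal_lt_top)]
    let A : StrongDual ℂ ((Fin n → ℂ) × (Fin n → ℂ)) := L.extendRCLike
    have hA : ∀ q, (A q).re = L q := fun q => StrongDual.re_extendRCLike_apply (𝕜 := ℂ) L q
    have e := hEq _ _ (fock_aux_exp n t lam ht hlam ((I / 2 : ℂ) • A))
      (fock_aux_exp n t lam ht hlam ((-I / 2 : ℂ) • A))
    have key : ∀ q, Complex.exp (((I / 2 : ℂ) • A) q) *
        (starRingEnd ℂ) (Complex.exp (((-I / 2 : ℂ) • A) q)) = Complex.exp (L q * I) := by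
      intro q
      rw [← Complex.exp_conj, ← Complex.exp_add, ← hA q, Complex.re_eq_add_conj]
      congr 1
      have h2 : (starRingEnd ℂ) (2 : ℂ) = 2 := map_ofNat _ 2
      simp [h2]
      ring
    simp only [key] at e
    simp only [ENNReal.toReal_ofReal (hUnonneg _), ENNReal.toReal_ofReal (hW0 _),
      Complex.real_smul]
    simp only [mul_comm (Complex.exp _)] at e
    exact e.symm
  rw [withDensity_eq_iff hmU.aemeasurable hmW.aemeasurable] at hmeas
  · filter_upwards [hmeas] with q hq
    exact (ENNReal.ofReal_eq_ofReal_iff (hUnonneg q) (hW0 q)).1 hq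
  · exact hUi.lintegral_lt_top.ne
end
end

section
/- Let n ≥ 1 be an integer and t > 0. For every Schwartz function f on ℝ^{2n+1} one has the Plancherel-type identity ∫_{ℝ^{2n+1}} |f(x,u,ξ)|² dx du dξ = (2π)^{-1} ∫_{ℝ\{0}} ( ∫_{ℂ^{2n}} |H_t^λ(f^λ)(z,w)|² W_t^λ(z,w) dz dw ) dλ. (This identity expresses that the heat kernel transform on the Heisenberg group identifies L²(ℝ^{2n+1}) with the direct integral over λ of the λ-twisted Bergman spaces with density e^{2tλ²} dλ.) -/
open MeasureTheory Complex Filter Topology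

noncomputable section

/-- The λ-twisted heat kernel transform. -/
def HT (n : ℕ) (t lam : ℝ) (f : (Fin n → ℝ) × (Fin n → ℝ) → ℂ) (z w : Fin n → ℂ) : ℂ :=
  ∫ p : (Fin n → ℝ) × (Fin n → ℝ),
    f p * pC n t lam (z - embC p.1) (w - embC p.2) *
      Complex.exp (-(Complex.I * lam / 2) * (dotC (embC p.1) w - dotC (embC p.2) z))

/-- The partial (inverse) Fourier transform in the central variable:
`f^λ(x,u) = ∫_ℝ e^{iλξ} f(x,u,ξ) dξ`. -/
def partialFT (n : ℕ) (f : (Fin n → ℝ) × (Fin n → ℝ) × ℝ → ℂ) (lam : ℝ)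
    (p : (Fin n → ℝ) × (Fin n → ℝ)) : ℂ :=
  ∫ ξ : ℝ, Complex.exp (Complex.I * lam * ξ) * f (p.1, p.2, ξ)

open scoped FourierTransform ContDiff RealInnerProductSpace ENNReal

section planch
variable {V : Type*} [NormedAddCommGroup V] [InnerProductSpace ℝ V] [FiniteDimensional ℝ V]
  [MeasurableSpace V] [BorelSpace V]

lemma fourier_cont {F : V → ℂ} (h1 : Integrable F) : Continuous (𝓕 F) :=
  VectorFourier.fourierIntegral_continuous Real.continuous_fourierChar
    (by exact continuous_inner) h1

lemma planch_ae {F : V → ℂ} (h1 : Integrable F) (h2 : MemLp F 2) :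
    ∀ᵐ x, (𝓕 (h2.toLp F) : Lp ℂ 2 (volume : Measure V)) x = 𝓕 F x := by
  apply ae_eq_of_integral_contDiff_smul_eq
  · exact (Lp.memLp _).locallyIntegrable (by norm_num)
  · exact (fourier_cont h1).locallyIntegrable
  intro g hg hc
  have hg₁ : HasCompactSupport (Complex.ofRealCLM ∘ g) := hc.comp_left rfl
  have hg₂ : ContDiff ℝ ∞ (Complex.ofRealCLM ∘ g) := by fun_prop
  set G : SchwartzMap V ℂ := hg₁.toSchwartzMap hg₂ with hG
  have e := congrArg (fun T => T G) (Lp.fourier_toTemperedDistribution_eq (h2.toLp F))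
  simp only [TemperedDistribution.fourier_apply, Lp.toTemperedDistribution_apply] at e
  have e1 : ∀ x, g x • (𝓕 (h2.toLp F) : Lp ℂ 2 (volume : Measure V)) x
      = G x • (𝓕 (h2.toLp F) : Lp ℂ 2 (volume : Measure V)) x := by
    intro x; simp [hG]
  have e2 : ∀ x, g x • 𝓕 F x = G x • 𝓕 F x := by
    intro x; simp [hG]
  simp_rw [e1, e2]
  rw [← e]
  have e3 : ∫ x, (𝓕 G) x • (h2.toLp F) x = ∫ x, (𝓕 G) x • F x := by
    apply integral_congr_ae
    filter_upwards [h2.coeFn_toLp] with x hx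
    rw [hx]
  rw [e3]
  have := VectorFourier.integral_fourierIntegral_smul_eq_flip (e := Real.fourierChar)
    (μ := (volume : Measure V)) (ν := volume) (L := innerₗ V) (f := G) (g := F)
    Real.continuous_fourierChar (by exact continuous_inner) G.integrable h1
  rw [flip_innerₗ] at this
  exact this

lemma planch {F : V → ℂ} (h1 : Integrable F) (h2 : MemLp F 2) :
    ∫⁻ x, ‖𝓕 F x‖ₑ ^ 2 = ∫⁻ x, ‖F x‖ₑ ^ 2 := by
  have h := Lp.norm_fourier_eq (h2.toLp F)
  have hh : eLpNorm (𝓕 (h2.toLp F) : Lp ℂ 2 (volume : Measure V)) 2 volume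
      = eLpNorm (h2.toLp F) 2 volume := by
    rw [Lp.norm_def, Lp.norm_def] at h
    exact (ENNReal.toReal_eq_toReal_iff' (Lp.eLpNorm_ne_top _) (Lp.eLpNorm_ne_top _)).1 h
  rw [eLpNorm_congr_ae (planch_ae h1 h2), eLpNorm_congr_ae h2.coeFn_toLp] at hh
  have := congrArg (fun t => t ^ (2:ℝ)) hh
  rw [eLpNorm_eq_lintegral_rpow_enorm_toReal (by norm_num) (by norm_num),
   eLpNorm_eq_lintegral_rpow_enorm_toReal (by norm_num) (by norm_num)] at this
  rw [← ENNReal.rpow_mul, ← ENNReal.rpow_mul] at this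
  simpa using this
end planch

section scale
variable {V : Type*} [NormedAddCommGroup V] [NormedSpace ℝ V] [FiniteDimensional ℝ V]
  [MeasureSpace V] [BorelSpace V] [(volume : Measure V).IsAddHaarMeasure]

lemma lint_scale {r : ℝ} (hr : r ≠ 0) (b : V) {G : V → ℝ≥0∞} (hG : Measurable G) :
    ∫⁻ x, G (r • x + b) =
      ENNReal.ofReal (|(r ^ Module.finrank ℝ V)⁻¹|) * ∫⁻ x, G x := by
  have h := lintegral_map (μ := (volume : Measure V)) (f := fun x => G (x + b))
    (g := fun x => r • x) (by fun_prop) (by fun_prop)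
  rw [← h, Measure.map_addHaar_smul _ hr, lintegral_smul_measure, lintegral_add_right_eq_self]
  rfl
end scale

/-- real dot product on pairs -/
def dotP {n : ℕ} (p q : (Fin n → ℝ) × (Fin n → ℝ)) : ℝ :=
  (∑ j, p.1 j * q.1 j) + ∑ j, p.2 j * q.2 j

lemma planch1 {h : ℝ → ℂ} (h1 : Integrable h) (h2 : MemLp h 2) :
    ∫⁻ l : ℝ, ‖∫ ξ : ℝ, Complex.exp (Complex.I * l * ξ) * h ξ‖ₑ ^ 2
      = ENNReal.ofReal (2 * Real.pi) * ∫⁻ x, ‖h x‖ₑ ^ 2 := by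
  have hs := lint_scale (V := ℝ) (r := -(2 * Real.pi)⁻¹)
    (neg_ne_zero.2 (inv_ne_zero (by positivity))) 0 (G := fun x => ‖𝓕 h x‖ₑ ^ 2)
    ((fourier_cont h1).measurable.enorm.pow_const 2)
  rw [planch h1 h2] at hs
  convert hs using 2
  · ext l; congr 2
    rw [Real.fourier_real_eq_integral_exp_smul]
    refine integral_congr_ae (ae_of_all _ fun ξ => ?_)
    dsimp only
    rw [smul_eq_mul]
    congr 2
    push_cast
    have : (Real.pi : ℂ) ≠ 0 := by exact_mod_cast Real.pi_ne_zero
    simp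
    field_simp
  · simp [abs_of_pos Real.pi_pos]

/-- Euclidean model -/
def eP (n : ℕ) : EuclideanSpace ℝ (Fin n ⊕ Fin n) ≃ᵐ (Fin n → ℝ) × (Fin n → ℝ) :=
  (MeasurableEquiv.toLp 2 (Fin n ⊕ Fin n → ℝ)).symm.trans
    (MeasurableEquiv.sumPiEquivProdPi (fun _ => ℝ))

lemma eP_mp (n : ℕ) : MeasurePreserving (eP n) :=
  (EuclideanSpace.volume_preserving_symm_measurableEquiv_toLp _).trans
    (volume_measurePreserving_sumPiEquivProdPi (fun _ : Fin n ⊕ Fin n => ℝ))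

lemma eP_fst (n : ℕ) (x) (j) : (eP n x).1 j = x (Sum.inl j) := rfl
lemma eP_snd (n : ℕ) (x) (j) : (eP n x).2 j = x (Sum.inr j) := rfl

lemma eP_inner (n : ℕ) (x y) : inner ℝ x y = dotP (eP n x) (eP n y) := by
  simp [dotP, eP_fst, eP_snd, PiLp.inner_apply, mul_comm]

lemma eP_smul (n : ℕ) (c : ℝ) (x) : eP n (c • x) = c • eP n x := rfl

lemma dotP_smul {n} (p q : (Fin n → ℝ) × (Fin n → ℝ)) (c : ℝ) :
    dotP p (c • q) = c * dotP p q := by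
  simp [dotP, Finset.mul_sum, mul_add, mul_left_comm]

lemma finrankP (n : ℕ) : Module.finrank ℝ ((Fin n → ℝ) × (Fin n → ℝ)) = 2 * n := by
  simp [two_mul]

lemma planch2 {n : ℕ} {F : (Fin n → ℝ) × (Fin n → ℝ) → ℂ} (h1 : Integrable F) (h2 : MemLp F 2) :
    ∫⁻ B : (Fin n → ℝ) × (Fin n → ℝ), ‖∫ p, Complex.exp (Complex.I * dotP p B) * F p‖ₑ ^ 2
      = ENNReal.ofReal ((2 * Real.pi) ^ (2 * n)) * ∫⁻ x, ‖F x‖ₑ ^ 2 := by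
  have g1 : Integrable (F ∘ eP n) := (eP_mp n).integrable_comp_of_integrable h1
  have g2 : MemLp (F ∘ eP n) 2 := h2.comp_measurePreserving (eP_mp n)
  have hp := planch g1 g2
  have hs := lint_scale (r := -(2 * Real.pi)⁻¹)
    (neg_ne_zero.2 (inv_ne_zero (by positivity))) 0 (G := fun x => ‖𝓕 (F ∘ eP n) x‖ₑ ^ 2)
    ((fourier_cont g1).measurable.enorm.pow_const 2)
  rw [hp] at hs
  have hr : ∫⁻ x, ‖(F ∘ eP n) x‖ₑ ^ 2 = ∫⁻ x, ‖F x‖ₑ ^ 2 :=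
    (eP_mp n).lintegral_comp_emb (eP n).measurableEmbedding (fun x => ‖F x‖ₑ ^ 2)
  rw [hr] at hs
  rw [← (eP_mp n).lintegral_comp_emb (eP n).measurableEmbedding]
  have hc : ENNReal.ofReal ((2 * Real.pi) ^ (2 * n)) =
    ENNReal.ofReal |((-(2 * Real.pi)⁻¹) ^
      Module.finrank ℝ (EuclideanSpace ℝ (Fin n ⊕ Fin n)))⁻¹| := by
    rw [finrank_euclideanSpace, Fintype.card_sum, Fintype.card_fin, abs_inv, abs_pow, abs_neg,
      abs_of_pos (by positivity : 0 < (2 * Real.pi)⁻¹), inv_pow, inv_inv, two_mul n]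
  rw [hc, ← hs]
  refine lintegral_congr fun l => ?_
  · congr 2
    rw [Real.fourier_eq', ← (eP_mp n).integral_comp (eP n).measurableEmbedding]
    congr 1; ext ξ
    rw [smul_eq_mul]
    congr 2
    rw [add_zero, eP_inner, eP_smul, dotP_smul]
    push_cast
    have : (Real.pi : ℂ) ≠ 0 := by exact_mod_cast Real.pi_ne_zero
    field_simp

instance haarP (n : ℕ) : (volume : Measure ((Fin n → ℝ) × (Fin n → ℝ))).IsAddHaarMeasure :=
  Measure.prod.instIsAddHaarMeasure _ _

lemma gauss2_s7 (n : ℕ) {b : ℝ} (hb : 0 < b) (q : (Fin n → ℝ) × (Fin n → ℝ)) :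
    ∫⁻ p : (Fin n → ℝ) × (Fin n → ℝ), ENNReal.ofReal (Real.exp (-b * dotP (p - q) (p - q)))
      = ENNReal.ofReal ((Real.pi / b) ^ n) := by
  rw [lintegral_sub_right_eq_self
    (fun p : (Fin n → ℝ) × (Fin n → ℝ) => ENNReal.ofReal (Real.exp (-b * dotP p p))) q]
  rw [← (eP_mp n).lintegral_comp_emb (eP n).measurableEmbedding]
  have h := GaussianFourier.integral_rexp_neg_mul_sq_norm
    (V := EuclideanSpace ℝ (Fin n ⊕ Fin n)) hb
  have hi : Integrable (fun v : EuclideanSpace ℝ (Fin n ⊕ Fin n) => Real.exp (-b * ‖v‖ ^ 2)) := by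
    by_contra hc
    rw [integral_undef hc] at h
    have : 0 < (Real.pi / b) ^
      ((Module.finrank ℝ (EuclideanSpace ℝ (Fin n ⊕ Fin n)) : ℝ) / 2) := by positivity
    linarith
  simp_rw [← eP_inner, real_inner_self_eq_norm_sq]
  rw [← ofReal_integral_eq_lintegral_ofReal hi (ae_of_all _ fun _ => (Real.exp_pos _).le), h]
  simp


/-- rotation -/
def Jp {n : ℕ} (p : (Fin n → ℝ) × (Fin n → ℝ)) : (Fin n → ℝ) × (Fin n → ℝ) := (p.2, -p.1)

lemma Jp_meas {n : ℕ} : Measurable (Jp (n := n)) := by unfold Jp; fun_prop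

lemma change_vars {n : ℕ} {r m : ℝ} (hr : 0 < r) (hD : 0 < r ^ 2 - m ^ 2)
    {Φ : ((Fin n → ℝ) × (Fin n → ℝ)) × ((Fin n → ℝ) × (Fin n → ℝ)) → ℝ≥0∞} (hΦ : Measurable Φ) :
    ∫⁻ Y, ∫⁻ X, Φ (r • X + m • Jp Y, r • Y - m • Jp X) =
      ENNReal.ofReal (((r ^ 2 - m ^ 2) ^ (2 * n))⁻¹) * ∫⁻ A, ∫⁻ B, Φ (A, B) := by
  have hJ := Jp_meas (n := n)
  set κ := (r ^ 2 - m ^ 2) / r with hκ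
  have hκ0 : 0 < κ := by positivity
  have h1 : ∀ Y : (Fin n → ℝ) × (Fin n → ℝ),
      ∫⁻ X, Φ (r • X + m • Jp Y, r • Y - m • Jp X) =
      ENNReal.ofReal ((r ^ (2 * n))⁻¹) * ∫⁻ A, Φ (A, κ • Y + (-(m / r)) • Jp A) := by
    intro Y
    have := lint_scale hr.ne' (m • Jp Y) (G := fun A => Φ (A, κ • Y + (-(m / r)) • Jp A))
      (by fun_prop)
    rw [finrankP, abs_of_pos (by positivity)] at this
    rw [← this]
    refine lintegral_congr fun X => ?_
    congr 2
    ext j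
    · simp [Jp, hκ]; field_simp; ring
    · simp [Jp, hκ]; field_simp; ring
  simp_rw [h1]
  rw [lintegral_const_mul _ (Measurable.lintegral_prod_right'
    (f := fun x : ((Fin n → ℝ) × (Fin n → ℝ)) × ((Fin n → ℝ) × (Fin n → ℝ)) =>
      Φ (x.2, κ • x.1 + (-(m / r)) • Jp x.2)) (by fun_prop)), lintegral_lintegral_swap (by
    apply Measurable.aemeasurable; unfold Function.uncurry; fun_prop)]
  have h2 : ∀ A : (Fin n → ℝ) × (Fin n → ℝ),
      ∫⁻ Y, Φ (A, κ • Y + (-(m / r)) • Jp A) =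
      ENNReal.ofReal ((κ ^ (2 * n))⁻¹) * ∫⁻ B, Φ (A, B) := by
    intro A
    have := lint_scale hκ0.ne' ((-(m / r)) • Jp A) (G := fun B => Φ (A, B))
      (by fun_prop)
    rw [finrankP, abs_of_pos (by positivity)] at this
    rw [← this]
  simp_rw [h2]
  rw [lintegral_const_mul _ (Measurable.lintegral_prod_right' hΦ), ← mul_assoc,
    ← ENNReal.ofReal_mul (by positivity)]
  congr 2
  rw [← mul_inv, ← mul_pow, hκ]
  field_simp

/-- splitting real and imaginary parts -/
def eQ (n : ℕ) : (Fin n → ℂ) × (Fin n → ℂ) ≃ᵐ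
    ((Fin n → ℝ) × (Fin n → ℝ)) × ((Fin n → ℝ) × (Fin n → ℝ)) :=
  (MeasurableEquiv.sumPiEquivProdPi (fun _ : Fin n ⊕ Fin n => ℂ)).symm.trans <|
  (MeasurableEquiv.piCongrRight (fun _ : Fin n ⊕ Fin n => Complex.measurableEquivRealProd)).trans <|
  (MeasurableEquiv.arrowProdEquivProdArrow ℝ ℝ (Fin n ⊕ Fin n)).trans <|
  MeasurableEquiv.prodCongr (MeasurableEquiv.sumPiEquivProdPi (fun _ => ℝ))
    (MeasurableEquiv.sumPiEquivProdPi (fun _ => ℝ))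

lemma eQ_mp (n : ℕ) : MeasurePreserving (eQ n) := by
  refine (volume_measurePreserving_sumPiEquivProdPi_symm (fun _ : Fin n ⊕ Fin n => ℂ)).trans ?_
  refine MeasurePreserving.trans (μb := volume) (volume_preserving_pi
    (fun _ : Fin n ⊕ Fin n => Complex.volume_preserving_equiv_real_prod)) ?_
  refine (volume_measurePreserving_arrowProdEquivProdArrow ℝ ℝ (Fin n ⊕ Fin n)).trans ?_
  exact MeasurePreserving.prod
    (volume_measurePreserving_sumPiEquivProdPi (fun _ : Fin n ⊕ Fin n => ℝ))
    (volume_measurePreserving_sumPiEquivProdPi (fun _ : Fin n ⊕ Fin n => ℝ))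

lemma eQ_apply (n : ℕ) (q) : eQ n q =
  ((fun j => (q.1 j).re, fun j => (q.2 j).re), (fun j => (q.1 j).im, fun j => (q.2 j).im)) := rfl

lemma lint_eQ {n : ℕ}
    {Φ : ((Fin n → ℝ) × (Fin n → ℝ)) × ((Fin n → ℝ) × (Fin n → ℝ)) → ℝ≥0∞} (hΦ : Measurable Φ) :
    ∫⁻ q, Φ (eQ n q) = ∫⁻ Y, ∫⁻ X, Φ (X, Y) := by
  rw [(eQ_mp n).lintegral_comp_emb (eQ n).measurableEmbedding, Measure.volume_eq_prod,
    lintegral_prod_symm _ hΦ.aemeasurable]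

lemma dotP_meas {n : ℕ} : Measurable
    (fun x : ((Fin n → ℝ) × (Fin n → ℝ)) × ((Fin n → ℝ) × (Fin n → ℝ)) => dotP x.1 x.2) := by
  unfold dotP; fun_prop

lemma dotP_sq_bound {n : ℕ} {a : ℝ} (ha : 0 < a) (p A : (Fin n → ℝ) × (Fin n → ℝ)) :
    2 * (-a * dotP p p + dotP p A) = dotP A A / (2 * a) -
      (2 * a)⁻¹ * dotP (A - (2 * a) • p) (A - (2 * a) • p) := by
  simp only [dotP, Finset.mul_sum, Finset.sum_div, mul_add, add_div, ← Finset.sum_add_distrib,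
    sub_eq_add_neg, ← Finset.sum_neg_distrib, neg_add]
  refine Finset.sum_congr rfl fun j _ => ?_
  simp
  field_simp
  ring

lemma dotP_nonneg {n : ℕ} (p : (Fin n → ℝ) × (Fin n → ℝ)) : 0 ≤ dotP p p :=
  add_nonneg (Finset.sum_nonneg fun _ _ => mul_self_nonneg _)
    (Finset.sum_nonneg fun _ _ => mul_self_nonneg _)

/-- the core transform -/
def core {n : ℕ} (a : ℝ) (g : (Fin n → ℝ) × (Fin n → ℝ) → ℂ)
    (A B : (Fin n → ℝ) × (Fin n → ℝ)) : ℂ :=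
  ∫ p, Complex.exp (Complex.I * dotP p B) * ((Real.exp (-a * dotP p p + dotP p A) : ℝ) * g p)

lemma core_meas {n : ℕ} (a : ℝ) {g : (Fin n → ℝ) × (Fin n → ℝ) → ℂ} (hg : StronglyMeasurable g) :
    Measurable (fun x : ((Fin n → ℝ) × (Fin n → ℝ)) × ((Fin n → ℝ) × (Fin n → ℝ)) =>
      core a g x.1 x.2) := by
  apply StronglyMeasurable.measurable
  unfold core
  apply StronglyMeasurable.integral_prod_right'
    (f := fun y : (((Fin n → ℝ) × (Fin n → ℝ)) × ((Fin n → ℝ) × (Fin n → ℝ))) × _ =>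
     Complex.exp (Complex.I * dotP y.2 y.1.2) *
      ((Real.exp (-a * dotP y.2 y.2 + dotP y.2 y.1.1) : ℝ) * g y.2))
  apply Measurable.stronglyMeasurable
  have := hg.measurable
  unfold dotP
  fun_prop

lemma core_plancherel {n : ℕ} {a : ℝ} (ha : 0 < a) {g : (Fin n → ℝ) × (Fin n → ℝ) → ℂ}
    (hg : StronglyMeasurable g) (h1 : Integrable g) (h2 : MemLp g 2) :
    ∫⁻ A, ∫⁻ B, ENNReal.ofReal (Real.exp (-(dotP A A / (2 * a)))) * ‖core a g A B‖ₑ ^ 2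
      = ENNReal.ofReal ((2 * Real.pi) ^ (2 * n) * (2 * Real.pi * a) ^ n) * ∫⁻ p, ‖g p‖ₑ ^ 2 := by
  have hgm := hg.measurable
  have hcm := core_meas a hg
  have key : ∀ A : (Fin n → ℝ) × (Fin n → ℝ),
      ∫⁻ B, ENNReal.ofReal (Real.exp (-(dotP A A / (2 * a)))) * ‖core a g A B‖ₑ ^ 2 =
      ENNReal.ofReal ((2 * Real.pi) ^ (2 * n)) * ∫⁻ p, ‖g p‖ₑ ^ 2 *
        ENNReal.ofReal (Real.exp (-(2 * a)⁻¹ * dotP (A - (2 * a) • p) (A - (2 * a) • p))) := by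
    intro A
    have hb : ∀ p, ‖((Real.exp (-a * dotP p p + dotP p A) : ℝ) : ℂ) * g p‖
        ≤ Real.exp (dotP A A / (4 * a)) * ‖g p‖ := by
      intro p
      rw [norm_mul, Complex.norm_real, Real.norm_of_nonneg (Real.exp_pos _).le]
      gcongr
      have := dotP_sq_bound ha p A
      have h3 : 0 ≤ (2 * a)⁻¹ * dotP (A - (2 * a) • p) (A - (2 * a) • p) :=
        mul_nonneg (by positivity) (dotP_nonneg _)
      have h4 : dotP A A / (2 * a) = 2 * (dotP A A / (4 * a)) := by field_simp; ring
      linarith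
    have hm : AEStronglyMeasurable (fun p => ((Real.exp (-a * dotP p p + dotP p A) : ℝ) : ℂ) * g p)
        volume := by
      apply Measurable.aestronglyMeasurable
      unfold dotP
      fun_prop
    have i1 := MemLp.of_le_mul (memLp_one_iff_integrable.2 h1) hm (ae_of_all _ hb)
    have i2 := MemLp.of_le_mul h2 hm (ae_of_all _ hb)
    have hB : Measurable (fun B => ‖core a g A B‖ₑ ^ 2) :=
      (hcm.comp (measurable_const.prodMk measurable_id)).enorm.pow_const 2
    rw [lintegral_const_mul _ hB]
    have := planch2 (memLp_one_iff_integrable.1 i1) i2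
    unfold core
    rw [this, mul_left_comm]
    congr 1
    rw [← lintegral_const_mul _ (by unfold dotP; fun_prop)]
    refine lintegral_congr fun p => ?_
    rw [enorm_mul, mul_pow, ← mul_assoc, mul_comm (‖g p‖ₑ ^ 2)]
    congr 1
    rw [← ofReal_norm, Complex.norm_real, Real.norm_of_nonneg (Real.exp_pos _).le,
      ← ENNReal.ofReal_pow (Real.exp_pos _).le, ← ENNReal.ofReal_mul (Real.exp_pos _).le,
      ← Real.exp_nat_mul, ← Real.exp_add]
    congr 2
    have := dotP_sq_bound ha p A
    push_cast
    linarith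
  simp_rw [key]
  rw [lintegral_const_mul _ (by
    apply Measurable.lintegral_prod_right' (f := fun x : ((Fin n → ℝ) × (Fin n → ℝ)) × ((Fin n → ℝ) × (Fin n → ℝ)) => ‖g x.2‖ₑ ^ 2 *
        ENNReal.ofReal (Real.exp (-(2 * a)⁻¹ * dotP (x.1 - (2 * a) • x.2) (x.1 - (2 * a) • x.2))))
    unfold dotP; fun_prop)]
  rw [lintegral_lintegral_swap (by
    apply Measurable.aemeasurable; unfold Function.uncurry dotP; fun_prop)]
  have h5 : ∀ p : (Fin n → ℝ) × (Fin n → ℝ), ∫⁻ A, ‖g p‖ₑ ^ 2 *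
        ENNReal.ofReal (Real.exp (-(2 * a)⁻¹ * dotP (A - (2 * a) • p) (A - (2 * a) • p)))
        = ‖g p‖ₑ ^ 2 * ENNReal.ofReal ((2 * Real.pi * a) ^ n) := by
    intro p
    rw [lintegral_const_mul _ (by unfold dotP; fun_prop), gauss2_s7 n (by positivity)]
    congr 3
    rw [div_inv_eq_mul]; ring
  simp_rw [h5]
  rw [lintegral_mul_const _ (by fun_prop), ENNReal.ofReal_mul (by positivity)]
  ring


/-- the Gaussian coefficient -/
def aa (t lam : ℝ) : ℝ := lam / 4 * cothR (t * lam)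

/-- first new variable -/
def vA {n : ℕ} (t lam : ℝ) (x : ((Fin n → ℝ) × (Fin n → ℝ)) × ((Fin n → ℝ) × (Fin n → ℝ))) :
    (Fin n → ℝ) × (Fin n → ℝ) := (2 * aa t lam) • x.1 + (lam / 2) • Jp x.2

/-- second new variable -/
def vB {n : ℕ} (t lam : ℝ) (x : ((Fin n → ℝ) × (Fin n → ℝ)) × ((Fin n → ℝ) × (Fin n → ℝ))) :
    (Fin n → ℝ) × (Fin n → ℝ) := (2 * aa t lam) • x.2 - (lam / 2) • Jp x.1

lemma sinh_pos_div {t lam : ℝ} (ht : 0 < t) (hl : lam ≠ 0) : 0 < lam / Real.sinh (t * lam) := by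
  rcases lt_or_gt_of_ne hl with h | h
  · exact div_pos_of_neg_of_neg h (Real.sinh_neg_iff.2 (mul_neg_of_pos_of_neg ht h))
  · exact div_pos h (Real.sinh_pos_iff.2 (mul_pos ht h))

lemma sinh_ne {t lam : ℝ} (ht : 0 < t) (hl : lam ≠ 0) : Real.sinh (t * lam) ≠ 0 := by
  intro h
  have := sinh_pos_div ht hl
  simp [h] at this

lemma aa_pos {t lam : ℝ} (ht : 0 < t) (hl : lam ≠ 0) : 0 < aa t lam := by
  have h1 := sinh_pos_div ht hl
  have h2 := Real.cosh_pos (t * lam)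
  have : aa t lam = lam / Real.sinh (t * lam) * Real.cosh (t * lam) / 4 := by
    unfold aa cothR; ring
  rw [this]; positivity

lemma aa_D {t lam : ℝ} (ht : 0 < t) (hl : lam ≠ 0) :
    (2 * aa t lam) ^ 2 - (lam / 2) ^ 2 = (lam / Real.sinh (t * lam)) ^ 2 / 4 := by
  have h1 := sinh_ne ht hl
  have h2 := Real.cosh_sq (t * lam)
  unfold aa cothR
  generalize t * lam = s at *
  field_simp
  rw [h2]; ring

lemma aa_coth {t lam : ℝ} (ht : 0 < t) (hl : lam ≠ 0) :
    lam * cothR (2 * t * lam) = 2 * aa t lam + lam ^ 2 / (8 * aa t lam) := by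
  have h1 := sinh_ne ht hl
  have h2 := Real.cosh_sq (t * lam)
  have h3 := (Real.cosh_pos (t * lam)).ne'
  unfold aa cothR
  rw [mul_assoc, Real.sinh_two_mul, Real.cosh_two_mul]
  field_simp
  ring

lemma aa_sinh {t lam : ℝ} (ht : 0 < t) (hl : lam ≠ 0) :
    lam / Real.sinh (2 * t * lam) * aa t lam = (lam / Real.sinh (t * lam)) ^ 2 / 8 := by
  have h1 := sinh_ne ht hl
  have h3 := (Real.cosh_pos (t * lam)).ne'
  unfold aa cothR
  rw [mul_assoc, Real.sinh_two_mul]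
  field_simp
  ring

lemma HT_eq {n : ℕ} (t lam : ℝ) (g : (Fin n → ℝ) × (Fin n → ℝ) → ℂ)
    (q : (Fin n → ℂ) × (Fin n → ℂ)) :
    HT n t lam g q.1 q.2 = (((((4 * Real.pi) ^ n)⁻¹ * (lam / Real.sinh (t * lam)) ^ n : ℝ) : ℂ) *
      Complex.exp (((-aa t lam : ℝ) : ℂ) * (dotC q.1 q.1 + dotC q.2 q.2))) *
      core (aa t lam) g (vA t lam (eQ n q)) (vB t lam (eQ n q)) := by
  unfold HT core
  rw [← integral_const_mul]
  refine integral_congr_ae (ae_of_all _ fun p => ?_)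
  have ha : ((-(lam / 4) * cothR (t * lam) : ℝ) : ℂ) = ((-aa t lam : ℝ) : ℂ) := by
    unfold aa; congr 1; ring
  dsimp only [pC]
  rw [ha, Complex.ofReal_exp]
  have key : ((-aa t lam : ℝ) : ℂ) * (dotC (q.1 - embC p.1) (q.1 - embC p.1)
        + dotC (q.2 - embC p.2) (q.2 - embC p.2))
      + -(Complex.I * lam / 2) * (dotC (embC p.1) q.2 - dotC (embC p.2) q.1)
      = ((-aa t lam : ℝ) : ℂ) * (dotC q.1 q.1 + dotC q.2 q.2)
       + (Complex.I * dotP p (vB t lam (eQ n q)) +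
        ((-aa t lam * dotP p p + dotP p (vA t lam (eQ n q)) : ℝ) : ℂ)) := by
    simp only [dotC, dotP, vA, vB, eQ_apply, Jp, embC]
    push_cast
    simp only [Finset.mul_sum, mul_add, ← Finset.sum_add_distrib, sub_eq_add_neg,
      ← Finset.sum_neg_distrib]
    refine Finset.sum_congr rfl fun j _ => ?_
    have hz := Complex.re_add_im (q.1 j)
    have hw := Complex.re_add_im (q.2 j)
    simp only [Pi.add_apply, Pi.neg_apply, Pi.smul_apply, smul_eq_mul, Prod.fst_add, Prod.snd_add,
      Prod.smul_fst, Prod.smul_snd, Prod.fst_neg, Prod.snd_neg, embC]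
    push_cast
    rw [← hz, ← hw]
    simp only [Complex.add_re, Complex.add_im, Complex.ofReal_re, Complex.ofReal_im,
      Complex.re_ofReal_mul, Complex.im_ofReal_mul, Complex.I_re, Complex.I_im, mul_zero, mul_one,
      add_zero, zero_add]
    ring_nf
    simp only [Complex.I_sq]
    ring
  have key2 := congrArg Complex.exp key
  rw [Complex.exp_add, Complex.exp_add, Complex.exp_add] at key2
  push_cast at key2 ⊢
  linear_combination (g p * ((4 * (Real.pi : ℂ)) ^ n)⁻¹ *
    ((lam : ℂ) / Complex.sinh (t * lam)) ^ n) * key2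

lemma W_exp {n : ℕ} {t lam : ℝ} (ht : 0 < t) (hl : lam ≠ 0) (q : (Fin n → ℂ) × (Fin n → ℂ)) :
    2 * (((-aa t lam : ℝ) : ℂ) * (dotC q.1 q.1 + dotC q.2 q.2)).re
      + lam * ((∑ j, (q.2 j).re * (q.1 j).im) - ∑ j, (q.2 j).im * (q.1 j).re)
      + -(lam / 4) * cothR (2 * t * lam) * ((∑ j, (2 * (q.1 j).im) ^ 2) + ∑ j, (2 * (q.2 j).im) ^ 2)
     = -(dotP (vA t lam (eQ n q)) (vA t lam (eQ n q)) / (2 * aa t lam)) := by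
  have h1 := aa_coth ht hl
  have h2 := aa_pos ht hl
  have h3 : -(lam / 4) * cothR (2 * t * lam) =
    -(2 * aa t lam + lam ^ 2 / (8 * aa t lam)) / 4 := by rw [← h1]; ring
  rw [h3, Complex.re_ofReal_mul, Complex.add_re]
  simp only [dotC, dotP, vA, eQ_apply, Jp, Complex.re_sum, Complex.mul_re]
  simp only [Finset.mul_sum, mul_add, ← Finset.sum_add_distrib, sub_eq_add_neg,
      ← Finset.sum_neg_distrib, Finset.sum_div, add_div, neg_add]
  refine Finset.sum_congr rfl fun j _ => ?_
  simp only [Pi.add_apply, Pi.neg_apply, Pi.smul_apply, smul_eq_mul, Prod.fst_add, Prod.snd_add,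
      Prod.smul_fst, Prod.smul_snd, Prod.fst_neg, Prod.snd_neg]
  field_simp
  ring

/-- total constant -/
def KK (n : ℕ) (t lam : ℝ) : ℝ :=
  (((4 * Real.pi) ^ n)⁻¹ * (lam / Real.sinh (t * lam)) ^ n) ^ 2 * (4 ^ n * (((4 * Real.pi) ^ n)⁻¹ *
    (lam / Real.sinh (2 * t * lam)) ^ n))

lemma KK_pos (n : ℕ) {t lam : ℝ} (ht : 0 < t) (hl : lam ≠ 0) : 0 < KK n t lam := by
  have h1 := sinh_pos_div ht hl
  have h2 := sinh_pos_div (t := 2 * t) (by positivity) hl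
  unfold KK; positivity

lemma pointwise {n : ℕ} {t lam : ℝ} (ht : 0 < t) (hl : lam ≠ 0)
    (g : (Fin n → ℝ) × (Fin n → ℝ) → ℂ) (q : (Fin n → ℂ) × (Fin n → ℂ)) :
    ‖HT n t lam g q.1 q.2‖ ^ 2 * Wt n t lam q.1 q.2 =
     KK n t lam * (Real.exp (-(dotP (vA t lam (eQ n q)) (vA t lam (eQ n q)) / (2 * aa t lam))) *
      ‖core (aa t lam) g (vA t lam (eQ n q)) (vB t lam (eQ n q))‖ ^ 2) := by
  have h1 := sinh_pos_div ht hl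
  rw [← W_exp ht hl, HT_eq, norm_mul, norm_mul, Complex.norm_real, Complex.norm_exp, Wt, pR,
    Real.norm_of_nonneg (by positivity), Real.exp_add, Real.exp_add, two_mul (Complex.re _),
    Real.exp_add, KK]
  ring

lemma KK_total (n : ℕ) {t lam : ℝ} (ht : 0 < t) (hl : lam ≠ 0) :
    KK n t lam * (((((2 * aa t lam) ^ 2 - (lam / 2) ^ 2) ^ (2 * n))⁻¹) *
      ((2 * Real.pi) ^ (2 * n) * (2 * Real.pi * aa t lam) ^ n)) = 1 := by
  have h1 := sinh_pos_div ht hl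
  rw [aa_D ht hl]
  have h2 := aa_sinh ht hl
  set c := lam / Real.sinh (t * lam)
  set s := lam / Real.sinh (2 * t * lam) with hs
  have : KK n t lam * ((((c ^ 2 / 4) ^ (2 * n))⁻¹) *
      ((2 * Real.pi) ^ (2 * n) * (2 * Real.pi * aa t lam) ^ n)) =
      ((((4 * Real.pi))⁻¹ * c) ^ 2 * (4 * ((4 * Real.pi)⁻¹)) * (((c ^ 2 / 4) ^ 2)⁻¹) *
        ((2 * Real.pi) ^ 2 * (2 * Real.pi * (s * aa t lam)))) ^ n := by
    unfold KK
    rw [← hs]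
    simp only [mul_pow, inv_pow, ← pow_mul, div_pow]
    ring
  rw [this, h2]
  convert one_pow n
  have := Real.pi_pos
  field_simp
  norm_num

lemma Wt_meas {n : ℕ} (t lam : ℝ) : Measurable
    (fun q : (Fin n → ℂ) × (Fin n → ℂ) => Wt n t lam q.1 q.2) := by
  unfold Wt pR; fun_prop

lemma vA_meas {n : ℕ} (t lam : ℝ) : Measurable (vA (n := n) t lam) := by
  have := Jp_meas (n := n)
  unfold vA; fun_prop

lemma vB_meas {n : ℕ} (t lam : ℝ) : Measurable (vB (n := n) t lam) := by
  have := Jp_meas (n := n)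
  unfold vB; fun_prop

lemma HT_isometry {n : ℕ} {t lam : ℝ} (ht : 0 < t) (hl : lam ≠ 0)
    {g : (Fin n → ℝ) × (Fin n → ℝ) → ℂ}
    (hg : StronglyMeasurable g) (h1 : Integrable g) (h2 : MemLp g 2) :
    ∫ q : (Fin n → ℂ) × (Fin n → ℂ), ‖HT n t lam g q.1 q.2‖ ^ 2 * Wt n t lam q.1 q.2
      = (∫⁻ p, ‖g p‖ₑ ^ 2).toReal := by
  have hK := KK_pos n ht hl
  have ha := aa_pos ht hl
  have hcm := core_meas (aa t lam) hg
  have hΦ : Measurable (fun x : ((Fin n → ℝ) × (Fin n → ℝ)) × ((Fin n → ℝ) × (Fin n → ℝ)) =>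
      ENNReal.ofReal (Real.exp (-(dotP x.1 x.1 / (2 * aa t lam)))) *
        ‖core (aa t lam) g x.1 x.2‖ₑ ^ 2) := by
    refine Measurable.mul ?_ (hcm.enorm.pow_const 2)
    unfold dotP; fun_prop
  have hAB : Measurable (fun x : ((Fin n → ℝ) × (Fin n → ℝ)) × ((Fin n → ℝ) × (Fin n → ℝ)) =>
    (vA t lam x, vB t lam x)) := (vA_meas t lam).prodMk (vB_meas t lam)
  have hD : 0 < (2 * aa t lam) ^ 2 - (lam / 2) ^ 2 := by
    rw [aa_D ht hl]; have := sinh_pos_div ht hl; positivity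
  have hΨ : Measurable (fun x => (fun y =>
        ENNReal.ofReal (Real.exp (-(dotP y.1 y.1 / (2 * aa t lam)))) *
        ‖core (aa t lam) g y.1 y.2‖ₑ ^ 2) (vA t lam x, vB t lam x)) := hΦ.comp hAB
  simp_rw [pointwise ht hl]
  rw [integral_eq_lintegral_of_nonneg_ae]
  rotate_left
  · exact ae_of_all _ fun q => by dsimp only [Pi.zero_apply]; positivity
  · apply Measurable.aestronglyMeasurable
    refine Measurable.const_mul (Measurable.mul ?_ ?_) _
    · have := (vA_meas (n := n) t lam).comp (eQ n).measurable
      refine Real.measurable_exp.comp (Measurable.neg (Measurable.div_const ?_ _))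
      exact dotP_meas.comp (this.prodMk this)
    · exact ((hcm.comp hAB).comp (eQ n).measurable).norm.pow_const 2
  congr 1
  have e1 : ∀ q : (Fin n → ℂ) × (Fin n → ℂ), ENNReal.ofReal (KK n t lam *
      (Real.exp (-(dotP (vA t lam (eQ n q)) (vA t lam (eQ n q)) / (2 * aa t lam))) *
      ‖core (aa t lam) g (vA t lam (eQ n q)) (vB t lam (eQ n q))‖ ^ 2)) =
      ENNReal.ofReal (KK n t lam) * (fun x => (fun y =>
        ENNReal.ofReal (Real.exp (-(dotP y.1 y.1 / (2 * aa t lam)))) *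
        ‖core (aa t lam) g y.1 y.2‖ₑ ^ 2) (vA t lam x, vB t lam x)) (eQ n q) := by
    intro q
    rw [ENNReal.ofReal_mul hK.le, ENNReal.ofReal_mul (Real.exp_pos _).le,
      ENNReal.ofReal_pow (norm_nonneg _), ofReal_norm]
  have hΨ2 : Measurable (fun q => (fun x => (fun y =>
        ENNReal.ofReal (Real.exp (-(dotP y.1 y.1 / (2 * aa t lam)))) *
        ‖core (aa t lam) g y.1 y.2‖ₑ ^ 2) (vA t lam x, vB t lam x)) (eQ n q)) :=
    hΨ.comp (eQ n).measurable
  rw [lintegral_congr e1, lintegral_const_mul _ hΨ2, lint_eQ hΨ]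
  have := change_vars (n := n) (m := lam / 2) (by positivity : 0 < 2 * aa t lam) hD hΦ
  dsimp only [vA, vB] at this ⊢
  rw [this, core_plancherel ha hg h1 h2, ← mul_assoc, ← mul_assoc,
    ← ENNReal.ofReal_mul hK.le, ← ENNReal.ofReal_mul (by positivity), mul_assoc (KK n t lam),
    KK_total n ht hl]
  simp

set_option maxHeartbeats 1000000 in
lemma heat_main
    (n : ℕ) (t : ℝ) (ht : 0 < t)
    (f : SchwartzMap ((Fin n → ℝ) × (Fin n → ℝ) × ℝ) ℂ) :
    ∫ p : (Fin n → ℝ) × (Fin n → ℝ) × ℝ, ‖f p‖ ^ 2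
      = (2 * Real.pi)⁻¹ *
        ∫ lam in ({0}ᶜ : Set ℝ),
          ∫ q : (Fin n → ℂ) × (Fin n → ℂ),
            ‖HT n t lam (partialFT n (fun p => f p) lam) q.1 q.2‖ ^ 2 *
              Wt n t lam q.1 q.2 := by
  have : (volume : Measure ((Fin n → ℝ) × ℝ)).IsAddHaarMeasure :=
    Measure.prod.instIsAddHaarMeasure _ _
  have : (volume : Measure ((Fin n → ℝ) × (Fin n → ℝ) × ℝ)).IsAddHaarMeasure :=
    Measure.prod.instIsAddHaarMeasure _ _
  have hfc : Continuous f := f.continuous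
  have f1 : Integrable f := f.integrable
  have f2 : MemLp f 2 := f.memLp 2
  set h : ((Fin n → ℝ) × (Fin n → ℝ)) × ℝ → ℂ := fun x => f (x.1.1, x.1.2, x.2) with hh
  have hmp : MeasurePreserving (MeasurableEquiv.prodAssoc :
     ((Fin n → ℝ) × (Fin n → ℝ)) × ℝ ≃ᵐ _) := volume_preserving_prodAssoc
  have hc : Continuous h := by rw [hh]; fun_prop
  have h1 : Integrable h := hmp.integrable_comp_of_integrable f1
  have h2 : MemLp h 2 := f2.comp_measurePreserving hmp
  have hl : ∫⁻ x, ‖h x‖ₑ ^ 2 = ∫⁻ x, ‖f x‖ₑ ^ 2 :=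
    hmp.lintegral_comp_emb (MeasurableEquiv.measurableEmbedding _) (fun x => ‖f x‖ₑ ^ 2)
  have sqfin : ∀ {α : Type} [MeasureSpace α] (u : α → ℂ), AEStronglyMeasurable u volume →
      (MemLp u 2 ↔ ∫⁻ x, ‖u x‖ₑ ^ 2 < ⊤) := by
    intro α _ u hu
    rw [MemLp, eLpNorm_lt_top_iff_lintegral_rpow_enorm_lt_top (by norm_num) (by norm_num)]
    simp [hu]
  have hl2 : ∫⁻ p, ∫⁻ ξ, ‖h (p, ξ)‖ₑ ^ 2 = ∫⁻ x, ‖f x‖ₑ ^ 2 := by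
    rw [← hl, Measure.volume_eq_prod ((Fin n → ℝ) × (Fin n → ℝ)) ℝ,
      lintegral_prod _ (hc.measurable.enorm.pow_const 2).aemeasurable]
  set g : ℝ → (Fin n → ℝ) × (Fin n → ℝ) → ℂ := fun lam => partialFT n (fun p => f p) lam with hgd
  have gm : StronglyMeasurable (fun x : ℝ × ((Fin n → ℝ) × (Fin n → ℝ)) => g x.1 x.2) := by
    apply StronglyMeasurable.integral_prod_right'
      (f := fun y : (ℝ × ((Fin n → ℝ) × (Fin n → ℝ))) × ℝ =>
        Complex.exp (Complex.I * y.1.1 * y.2) * f (y.1.2.1, y.1.2.2, y.2))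
    apply Continuous.stronglyMeasurable
    fun_prop
  have gml : ∀ lam, StronglyMeasurable (g lam) := fun lam =>
    gm.comp_measurable (measurable_const.prodMk measurable_id)
  have g1 : ∀ lam, Integrable (g lam) := by
    intro lam
    apply Integrable.integral_prod_left
      (f := fun x : ((Fin n → ℝ) × (Fin n → ℝ)) × ℝ => Complex.exp (Complex.I * lam * x.2) * h x)
    refine Integrable.mono h1 (Continuous.aestronglyMeasurable (by fun_prop)) (ae_of_all _ ?_)
    intro x
    rw [norm_mul, Complex.norm_exp]
    simp
  have pl : ∫⁻ lam, ∫⁻ p, ‖g lam p‖ₑ ^ 2 = ENNReal.ofReal (2 * Real.pi) * ∫⁻ x, ‖f x‖ₑ ^ 2 := by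
    rw [lintegral_lintegral_swap (gm.measurable.enorm.pow_const 2).aemeasurable, ← hl2,
      ← lintegral_const_mul _ (Measurable.lintegral_prod_right' (hc.measurable.enorm.pow_const 2))]
    apply lintegral_congr_ae
    have m1 := h1.prod_right_ae
    have hlt : ∫⁻ p, ∫⁻ ξ, ‖h (p, ξ)‖ₑ ^ 2 < ⊤ := by
      rw [hl2]
      exact (sqfin f hfc.aestronglyMeasurable).1 f2
    have m2 := ae_lt_top (Measurable.lintegral_prod_right' (hc.measurable.enorm.pow_const 2)) hlt.ne
    filter_upwards [m1, m2] with p i1 i2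
    have hcp : Continuous (fun ξ => h (p, ξ)) := by fun_prop
    exact planch1 i1 ((sqfin _ hcp.aestronglyMeasurable).2 i2)
  have ffin : ∫⁻ x, ‖f x‖ₑ ^ 2 < ⊤ := (sqfin f hfc.aestronglyMeasurable).1 f2
  have plfin : ∫⁻ lam, ∫⁻ p, ‖g lam p‖ₑ ^ 2 ≠ ⊤ := by
    rw [pl]; exact ENNReal.mul_ne_top ENNReal.ofReal_ne_top ffin.ne
  have Nm : Measurable (fun lam => ∫⁻ p, ‖g lam p‖ₑ ^ 2) :=
    Measurable.lintegral_prod_right' (gm.measurable.enorm.pow_const 2)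
  have Nfin := ae_lt_top Nm plfin
  have hae : ∀ᵐ lam : ℝ, (∫ q : (Fin n → ℂ) × (Fin n → ℂ),
      ‖HT n t lam (g lam) q.1 q.2‖ ^ 2 * Wt n t lam q.1 q.2)
        = (∫⁻ p, ‖g lam p‖ₑ ^ 2).toReal := by
    have h0 : ∀ᵐ lam : ℝ, lam ≠ 0 := Measure.ae_ne volume 0
    filter_upwards [Nfin, h0] with lam a1 a2
    exact HT_isometry ht a2 (gml lam) (g1 lam)
      ((sqfin _ (gml lam).aestronglyMeasurable).2 a1)
  have hsq : AEStronglyMeasurable (fun x => ‖f x‖ ^ 2) volume :=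
    (hfc.norm.pow 2).aestronglyMeasurable
  rw [restrict_compl_singleton, integral_congr_ae hae,
    integral_toReal Nm.aemeasurable Nfin, pl, ENNReal.toReal_mul,
    ENNReal.toReal_ofReal (by positivity), ← mul_assoc, inv_mul_cancel₀ (by positivity), one_mul,
    integral_eq_lintegral_of_nonneg_ae (ae_of_all _ fun _ => by dsimp only [Pi.zero_apply]; positivity)
      hsq]
  congr 1
  refine lintegral_congr fun x => ?_
  rw [ENNReal.ofReal_pow (norm_nonneg _), ofReal_norm]

/-- Plancherel-type identity: for every Schwartz function `f` on `ℝ^{2n+1}`,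
`∫ |f|² = (2π)⁻¹ ∫_{ℝ∖{0}} ( ∫_{ℂ^{2n}} |H_t^λ(f^λ)(z,w)|² W_t^λ(z,w) dz dw ) dλ`. -/
theorem heat_transform_direct_integral
    (n : ℕ) (hn : 1 ≤ n) (t : ℝ) (ht : 0 < t)
    (f : SchwartzMap ((Fin n → ℝ) × (Fin n → ℝ) × ℝ) ℂ) :
    ∫ p : (Fin n → ℝ) × (Fin n → ℝ) × ℝ, ‖f p‖ ^ 2
      = (2 * Real.pi)⁻¹ *
        ∫ lam in ({0}ᶜ : Set ℝ),
          ∫ q : (Fin n → ℂ) × (Fin n → ℂ),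
            ‖HT n t lam (partialFT n (fun p => f p) lam) q.1 q.2‖ ^ 2 *
              Wt n t lam q.1 q.2 := by
  exact heat_main n t ht f
end
end

section
/- Let n ≥ 1 be an integer and t > 0. For all z, w ∈ ℍ_ℂ, ∫_ℍ k_t^∼(conj(w)^{-1} h) · k_t^∼(h^{-1} z) dh = k_{2t}^∼(conj(w)^{-1} z), where conj(w) denotes componentwise complex conjugation of w ∈ ℂ^n × ℂ^n × ℂ and products and inverses are taken in ℍ_ℂ. (This identity shows that the reproducing kernel of the image of the heat kernel transform ℋ_t is 𝒦^t(z,w) = k_{2t}^∼(conj(w)^{-1} z).) -/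
open MeasureTheory Complex Filter Topology

noncomputable section

/-- Points of the Heisenberg group `ℍ = ℝ^n × ℝ^n × ℝ`. -/
abbrev Hpt (n : ℕ) := (Fin n → ℝ) × (Fin n → ℝ) × ℝ

/-- Points of the complexified Heisenberg group `ℍ_ℂ = ℂ^n × ℂ^n × ℂ`. -/
abbrev HCpt (n : ℕ) := (Fin n → ℂ) × (Fin n → ℂ) × ℂ

/-- Group law on `ℍ_ℂ`:
`(z,w,ζ)(z',w',ζ') = (z+z', w+w', (1/2)(z·w' - w·z') + ζ + ζ')`. -/
def HCmul {n : ℕ} (g g' : HCpt n) : HCpt n :=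
  (g.1 + g'.1, g.2.1 + g'.2.1,
    (1 / 2 : ℂ) * (dotC g.1 g'.2.1 - dotC g.2.1 g'.1) + g.2.2 + g'.2.2)

/-- Inversion on `ℍ_ℂ`: `(z,w,ζ)⁻¹ = (-z,-w,-ζ)`. -/
def HCinv {n : ℕ} (g : HCpt n) : HCpt n := (-g.1, -g.2.1, -g.2.2)

/-- Embedding `ℍ → ℍ_ℂ`. -/
def embH {n : ℕ} (h : Hpt n) : HCpt n := (embC h.1, embC h.2.1, (h.2.2 : ℂ))

/-- The complexified heat kernel on `ℍ_ℂ`: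
`k_t^∼(z,w,ζ) = (2π)^{-1}(4π)^{-n} ∫_ℝ e^{-iλζ} e^{-tλ²} (λ/sinh(λt))^n
  exp(-(λ/4)coth(tλ)(z·z + w·w)) dλ`. -/
def ktC (n : ℕ) (t : ℝ) (g : HCpt n) : ℂ :=
  ((2 * Real.pi)⁻¹ : ℝ) * (((4 * Real.pi) ^ n)⁻¹ : ℝ) *
    ∫ lam : ℝ,
      Complex.exp (-(Complex.I * lam) * g.2.2) * ((Real.exp (-t * lam ^ 2) : ℝ) : ℂ) *
        (((lam / Real.sinh (lam * t)) ^ n : ℝ) : ℂ) *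
        Complex.exp (((-(lam / 4) * cothR (t * lam) : ℝ) : ℂ) *
          (dotC g.1 g.1 + dotC g.2.1 g.2.1))

/-- The heat kernel transform on the Heisenberg group:
`ℋ_t f(g) = ∫_ℍ f(h) k_t^∼(h⁻¹g) dh` for `g ∈ ℍ_ℂ`. -/
def HKT (n : ℕ) (t : ℝ) (f : Hpt n → ℂ) (g : HCpt n) : ℂ :=
  ∫ h : Hpt n, f h * ktC n t (HCmul (HCinv (embH h)) g)

/-- Componentwise complex conjugation on `ℍ_ℂ`. -/
def conjHC {n : ℕ} (g : HCpt n) : HCpt n :=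
  (fun j => (starRingEnd ℂ) (g.1 j), fun j => (starRingEnd ℂ) (g.2.1 j),
    (starRingEnd ℂ) g.2.2)


open scoped FourierTransform SchwartzMap in
theorem aux_fourier_ae (f : ℝ → ℂ) (hf : Integrable f) (hf2 : MemLp f 2) :
    ((𝓕 (hf2.toLp f) : Lp ℂ 2 (volume : Measure ℝ)) : ℝ → ℂ) =ᵐ[volume] 𝓕 f := by
  have hc : Continuous (𝓕 f) := by
    have := VectorFourier.fourierIntegral_continuous (μ := (volume : Measure ℝ)) Real.continuous_fourierChar
      (L := innerₗ ℝ) continuous_inner hf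
    exact this
  apply ae_eq_of_integral_contDiff_smul_eq
  · exact (Lp.memLp _).locallyIntegrable (by norm_num)
  · exact hc.locallyIntegrable
  intro g hg hgs
  have hgs' : HasCompactSupport (fun x => (g x : ℂ)) := hgs.comp_left (g := fun x : ℝ => (x:ℂ)) (by simp)
  let φ : 𝓢(ℝ, ℂ) := hgs'.toSchwartzMap (Complex.ofRealCLM.contDiff.comp hg)
  have h1 := congrArg (fun T : 𝓢'(ℝ, ℂ) => T φ) (Lp.fourier_toTemperedDistribution_eq (hf2.toLp f))
  simp only [TemperedDistribution.fourier_apply, Lp.toTemperedDistribution_apply] at h1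
  have h2 : ∀ x, φ x = (g x : ℂ) := fun x => rfl
  have h3 : ∫ x, (𝓕 φ) x • (hf2.toLp f : ℝ → ℂ) x = ∫ x, (𝓕 φ) x • f x := by
    apply integral_congr_ae
    filter_upwards [hf2.coeFn_toLp] with x hx
    rw [hx]
  have h4 : ∫ x, (𝓕 φ) x • f x = ∫ x, φ x • (𝓕 f) x := by
    have := VectorFourier.integral_fourierIntegral_smul_eq_flip (μ := (volume : Measure ℝ)) (ν := (volume : Measure ℝ)) Real.continuous_fourierChar
      (L := innerₗ ℝ) continuous_inner φ.integrable hf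
    simpa using! this
  rw [h3, h4] at h1
  simpa [h2] using h1.symm

/-- the transform -/
noncomputable def TT (f : ℝ → ℂ) (s : ℝ) : ℂ := ∫ l : ℝ, Complex.exp (-(Complex.I * l) * s) * f l

open scoped FourierTransform in
theorem TT_eq (f : ℝ → ℂ) (s : ℝ) : TT f (2 * Real.pi * s) = 𝓕 f s := by
  rw [Real.fourier_real_eq_integral_exp_smul]
  unfold TT
  congr 1
  ext l
  simp only [smul_eq_mul]
  congr 2
  push_cast
  ring


theorem eLpNorm_two_sq (f : ℝ → ℂ) : eLpNorm f 2 volume ^ 2 = ∫⁻ x, ‖f x‖ₑ ^ 2 := by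
  have := eLpNorm_nnreal_pow_eq_lintegral (f := f) (μ := volume) (p := 2) (by norm_num)
  simpa using! this

open scoped FourierTransform in
theorem TT_norm (f : ℝ → ℂ) (hf : Integrable f) (hf2 : MemLp f 2) :
    ∫⁻ s, ‖TT f s‖ₑ ^ 2 = ENNReal.ofReal (2 * Real.pi) * ∫⁻ l, ‖f l‖ₑ ^ 2 := by
  have h1 : ∫⁻ s, ‖𝓕 f s‖ₑ ^ 2 = ∫⁻ l, ‖f l‖ₑ ^ 2 := by
    rw [← eLpNorm_two_sq, ← eLpNorm_two_sq, ← eLpNorm_congr_ae (aux_fourier_ae f hf hf2),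
      ← Lp.enorm_toLp hf2, ← Lp.enorm_def]
    congr 1
    have := Lp.norm_fourier_eq (hf2.toLp f)
    rw [← ofReal_norm, ← ofReal_norm, this]
  rw [← h1]
  have hpi : (2 * Real.pi) ≠ 0 := by positivity
  have h2 := Real.smul_map_volume_mul_left hpi
  conv_lhs => rw [← h2]
  have h3 := (Homeomorph.mulLeft₀ _ hpi).measurableEmbedding.lintegral_map (μ := volume) (fun s => ‖TT f s‖ₑ ^ 2)
  rw [lintegral_smul_measure, abs_of_pos (by positivity), smul_eq_mul]
  congr 1
  refine h3.trans ?_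
  simp [TT_eq]

open scoped FourierTransform ComplexConjugate in
theorem TT_bilin (f g : ℝ → ℂ) (hf : Integrable f) (hf2 : MemLp f 2) (hg : Integrable g) (hg2 : MemLp g 2) :
    ∫ s, TT f s * TT g (-s) = 2 * Real.pi * ∫ l, f l * g l := by
  have hcg : Integrable (fun x => conj (g x)) := by
    have := (Complex.conjCLE : ℂ →L[ℝ] ℂ).integrable_comp hg
    simpa using this
  have hcg2 : MemLp (fun x => conj (g x)) 2 := by
    have := (Complex.conjCLE : ℂ →L[ℝ] ℂ).comp_memLp' hg2
    simpa [Function.comp_def] using this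
  have h1 := Lp.inner_fourier_eq (hcg2.toLp _) (hf2.toLp f)
  rw [L2.inner_def, L2.inner_def] at h1
  have e1 : ∫ a, inner ℂ ((hcg2.toLp _ : ℝ → ℂ) a) ((hf2.toLp f : ℝ → ℂ) a) = ∫ l, f l * g l := by
    apply integral_congr_ae
    filter_upwards [hf2.coeFn_toLp, hcg2.coeFn_toLp] with x h1 h2
    rw [h1, h2]
    simp
  have hgc : ∀ s, TT g (-s) = conj (TT (fun x => conj (g x)) s) := by
    intro s
    unfold TT
    rw [← integral_conj]
    congr 1
    ext l
    simp [← Complex.exp_conj]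
  have e2 : ∫ a, inner ℂ ((𝓕 (hcg2.toLp _) : Lp ℂ 2 (volume : Measure ℝ)) a) ((𝓕 (hf2.toLp f) : Lp ℂ 2 (volume : Measure ℝ)) a)
      = ∫ s, TT f (2 * Real.pi * s) * TT g (-(2 * Real.pi * s)) := by
    apply integral_congr_ae
    filter_upwards [aux_fourier_ae _ hf hf2, aux_fourier_ae _ hcg hcg2] with x h1 h2
    rw [h1, h2, hgc, TT_eq, TT_eq]
    simp
  rw [e1, e2, Measure.integral_comp_mul_left (fun s => TT f s * TT g (-s))] at h1
  rw [← h1, abs_of_pos (by positivity)]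
  have : (Real.pi : ℂ) ≠ 0 := by exact_mod_cast Real.pi_ne_zero
  simp
  field_simp

section abs
set_option linter.unusedSectionVars false
set_option linter.unusedVariables false
variable {Y : Type*} [MeasureSpace Y] [SFinite (volume : Measure Y)]

theorem TT_meas (Φ : Y → ℝ → ℂ) (mΦ : Measurable (Function.uncurry Φ)) :
    StronglyMeasurable (fun p : Y × ℝ => TT (Φ p.1) p.2) := by
  unfold TT
  have : Measurable (fun q : (Y × ℝ) × ℝ => Complex.exp (-(Complex.I * q.2) * q.1.2) * Φ q.1.1 q.2) := by
    apply Measurable.mul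
    · fun_prop
    · exact mΦ.comp (by fun_prop : Measurable (fun q : (Y × ℝ) × ℝ => (q.1.1, q.2)))
  exact this.stronglyMeasurable.integral_prod_right'

theorem dom_int (Φ : Y → ℝ → ℂ) (mΦ : Measurable (Function.uncurry Φ)) (G : Y → ℝ) (H : ℝ → ℝ)
    (hH : Integrable H) (hd : ∀ y, ∀ᵐ l, ‖Φ y l‖ ≤ G y * H l) (y : Y) : Integrable (Φ y) := by
  refine (hH.const_mul (G y)).mono' ?_ (hd y)
  exact (mΦ.comp (by fun_prop : Measurable (fun l : ℝ => (y, l)))).aestronglyMeasurable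

theorem dom_L2 (Φ : Y → ℝ → ℂ) (mΦ : Measurable (Function.uncurry Φ)) (G : Y → ℝ) (H : ℝ → ℝ)
    (hH2 : MemLp H 2) (hd : ∀ y, ∀ᵐ l, ‖Φ y l‖ ≤ G y * H l) (y : Y) : MemLp (Φ y) 2 := by
  refine (hH2.const_mul (G y)).mono' ?_ (hd y)
  exact (mΦ.comp (by fun_prop : Measurable (fun l : ℝ => (y, l)))).aestronglyMeasurable

theorem memLp_two_prod (F : Y × ℝ → ℂ) (hF : AEStronglyMeasurable F) (h : ∫⁻ p, ‖F p‖ₑ ^ 2 < ⊤) :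
    MemLp F 2 := by
  refine ⟨hF, ?_⟩
  have := eLpNorm_nnreal_pow_eq_lintegral (f := F) (μ := volume) (p := 2) (by norm_num)
  have h2 : eLpNorm F 2 volume ^ 2 = ∫⁻ x, ‖F x‖ₑ ^ 2 := by simpa using! this
  rw [← h2] at h
  simpa using h

theorem dom_prod (Φ : Y → ℝ → ℂ) (mΦ : Measurable (Function.uncurry Φ)) (G : Y → ℝ) (H : ℝ → ℝ)
    (hG2 : MemLp G 2) (hH2 : MemLp H 2) (hd : ∀ y, ∀ᵐ l, ‖Φ y l‖ ≤ G y * H l) :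
    ∫⁻ y, ∫⁻ l, ‖Φ y l‖ₑ ^ 2 < ⊤ := by
  have hG' : ∫⁻ y, ‖G y‖ₑ ^ 2 < ⊤ := by
    have := eLpNorm_nnreal_pow_eq_lintegral (f := G) (μ := volume) (p := 2) (by norm_num)
    have h2 : eLpNorm G 2 volume ^ 2 = ∫⁻ x, ‖G x‖ₑ ^ 2 := by simpa using! this
    rw [← h2]
    exact ENNReal.pow_lt_top hG2.2
  have hH' : ∫⁻ y, ‖H y‖ₑ ^ 2 < ⊤ := by
    have := eLpNorm_nnreal_pow_eq_lintegral (f := H) (μ := volume) (p := 2) (by norm_num)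
    have h2 : eLpNorm H 2 volume ^ 2 = ∫⁻ x, ‖H x‖ₑ ^ 2 := by simpa using! this
    rw [← h2]
    exact ENNReal.pow_lt_top hH2.2
  calc ∫⁻ y, ∫⁻ l, ‖Φ y l‖ₑ ^ 2 ≤ ∫⁻ y, ∫⁻ l, ‖G y‖ₑ ^ 2 * ‖H l‖ₑ ^ 2 := by
        apply lintegral_mono
        intro y
        apply lintegral_mono_ae
        filter_upwards [hd y] with l hl
        rw [← mul_pow, ← enorm_mul]
        gcongr
        rw [enorm_le_iff_norm_le]
        exact hl.trans (le_abs_self _)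
    _ = (∫⁻ y, ‖G y‖ₑ ^ 2) * ∫⁻ l, ‖H l‖ₑ ^ 2 := by
        have : ∀ y, ∫⁻ l, ‖G y‖ₑ ^ 2 * ‖H l‖ₑ ^ 2 = ‖G y‖ₑ ^ 2 * ∫⁻ l, ‖H l‖ₑ ^ 2 := fun y =>
          lintegral_const_mul' _ _ (by finiteness)
        simp_rw [this]
        rw [lintegral_mul_const' _ _ hH'.ne]
    _ < ⊤ := ENNReal.mul_lt_top hG' hH'

theorem TT_memLp (Φ : Y → ℝ → ℂ) (mΦ : Measurable (Function.uncurry Φ)) (G : Y → ℝ) (H : ℝ → ℝ)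
    (hG2 : MemLp G 2) (hH : Integrable H) (hH2 : MemLp H 2) (hd : ∀ y, ∀ᵐ l, ‖Φ y l‖ ≤ G y * H l) :
    MemLp (fun p : Y × ℝ => TT (Φ p.1) p.2) 2 := by
  apply memLp_two_prod _ (TT_meas Φ mΦ).aestronglyMeasurable
  have hm := (TT_meas Φ mΦ).measurable
  rw [Measure.volume_eq_prod, lintegral_prod _ (hm.enorm.pow_const 2).aemeasurable]
  have : ∀ y, ∫⁻ s, ‖TT (Φ y) s‖ₑ ^ 2 = ENNReal.ofReal (2 * Real.pi) * ∫⁻ l, ‖Φ y l‖ₑ ^ 2 := fun y =>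
    TT_norm _ (dom_int Φ mΦ G H hH hd y) (dom_L2 Φ mΦ G H hH2 hd y)
  simp_rw [this]
  rw [lintegral_const_mul' _ _ (by finiteness)]
  exact ENNReal.mul_lt_top (by finiteness) (dom_prod Φ mΦ G H hG2 hH2 hd)

theorem Phi_memLp (Φ : Y → ℝ → ℂ) (mΦ : Measurable (Function.uncurry Φ)) (G : Y → ℝ) (H : ℝ → ℝ)
    (hG2 : MemLp G 2) (hH2 : MemLp H 2) (hd : ∀ y, ∀ᵐ l, ‖Φ y l‖ ≤ G y * H l) :
    MemLp (fun p : Y × ℝ => Φ p.1 p.2) 2 := by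
  have hm : Measurable (fun p : Y × ℝ => Φ p.1 p.2) := mΦ
  apply memLp_two_prod _ hm.aestronglyMeasurable
  rw [Measure.volume_eq_prod, lintegral_prod _ (by fun_prop)]
  exact dom_prod Φ mΦ G H hG2 hH2 hd

theorem abstract_planch (Φ Ψ : Y → ℝ → ℂ) (mΦ : Measurable (Function.uncurry Φ))
    (mΨ : Measurable (Function.uncurry Ψ)) (G G' : Y → ℝ) (H H' : ℝ → ℝ)
    (hG2 : MemLp G 2) (hH : Integrable H) (hH2 : MemLp H 2) (hd : ∀ y, ∀ᵐ l, ‖Φ y l‖ ≤ G y * H l)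
    (hG2' : MemLp G' 2) (hH' : Integrable H') (hH2' : MemLp H' 2)
    (hd' : ∀ y, ∀ᵐ l, ‖Ψ y l‖ ≤ G' y * H' l) :
    ∫ p : Y × ℝ, TT (Φ p.1) p.2 * TT (Ψ p.1) (-p.2) = 2 * Real.pi * ∫ l, ∫ y, Φ y l * Ψ y l := by
  have h1 := TT_memLp Φ mΦ G H hG2 hH hH2 hd
  have h2 := TT_memLp Ψ mΨ G' H' hG2' hH' hH2' hd'
  have hmp : MeasurePreserving (fun p : Y × ℝ => (p.1, -p.2)) volume volume :=
    (MeasurePreserving.id (volume : Measure Y)).prod (Measure.measurePreserving_neg (volume : Measure ℝ))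
  have h3 := h2.comp_measurePreserving hmp
  have h4 : Integrable (fun p : Y × ℝ => TT (Φ p.1) p.2 * TT (Ψ p.1) (-p.2)) := h1.integrable_mul h3
  rw [Measure.volume_eq_prod] at h4 ⊢
  rw [integral_prod _ h4]
  have : ∀ y, ∫ s, TT (Φ y) s * TT (Ψ y) (-s) = 2 * Real.pi * ∫ l, Φ y l * Ψ y l := fun y =>
    TT_bilin _ _ (dom_int Φ mΦ G H hH hd y) (dom_L2 Φ mΦ G H hH2 hd y)
     (dom_int Ψ mΨ G' H' hH' hd' y) (dom_L2 Ψ mΨ G' H' hH2' hd' y)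
  simp_rw [this]
  rw [integral_const_mul]
  congr 1
  apply integral_integral_swap
  exact (Phi_memLp Φ mΦ G H hG2 hH2 hd).integrable_mul (Phi_memLp Ψ mΨ G' H' hG2' hH2' hd')

end abs

theorem sinh_le_mul_cosh {x : ℝ} (hx : 0 ≤ x) : Real.sinh x ≤ x * Real.cosh x := by
  have h : MonotoneOn (fun x : ℝ => x * Real.cosh x - Real.sinh x) (Set.Ici 0) := by
    apply monotoneOn_of_deriv_nonneg (convex_Ici 0)
    · fun_prop
    · fun_prop
    · intro y hy
      simp only [interior_Ici, Set.mem_Ioi] at hy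
      have : HasDerivAt (fun x : ℝ => x * Real.cosh x - Real.sinh x) (1 * Real.cosh y + y * Real.sinh y - Real.cosh y) y :=
        ((hasDerivAt_id y).mul (Real.hasDerivAt_cosh y)).sub (Real.hasDerivAt_sinh y)
      rw [this.deriv]
      have := Real.sinh_nonneg_iff.2 hy.le
      nlinarith [mul_nonneg hy.le this]
  have := h (Set.mem_Ici.2 le_rfl) (Set.mem_Ici.2 hx) hx
  simpa using this

theorem lcoth_pos_case {t l : ℝ} (ht : 0 < t) (hl : 0 < l) :
    |l| ≤ l * cothR (t * l) ∧ 1 / t ≤ l * cothR (t * l) ∧ l * cothR (t * l) ≤ |l| + 1 / t ∧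
      |l / Real.sinh (l * t)| ≤ 1 / t := by
  have hx : 0 < t * l := mul_pos ht hl
  have hs : 0 < Real.sinh (t * l) := Real.sinh_pos_iff.2 hx
  have h1 := Real.sinh_lt_cosh (t * l)
  have h2 := sinh_le_mul_cosh hx.le
  have h3 : t * l ≤ Real.sinh (t * l) := Real.self_le_sinh_iff.2 hx.le
  have h4 : Real.cosh (t * l) - Real.sinh (t * l) ≤ 1 := by
    rw [Real.cosh_sub_sinh]
    exact Real.exp_le_one_iff.2 (by linarith)
  unfold cothR
  rw [abs_of_pos hl, mul_comm l t, abs_of_pos (div_pos hl hs)]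
  refine ⟨?_, ?_, ?_, ?_⟩
  · rw [mul_div_assoc', le_div_iff₀ hs]; nlinarith
  · rw [mul_div_assoc', div_le_div_iff₀ ht hs]; nlinarith
  · rw [mul_div_assoc', div_le_iff₀ hs]
    have : t * (l * Real.cosh (t * l)) ≤ t * ((l + 1/t) * Real.sinh (t * l)) := by
      have e : t * ((l + 1/t) * Real.sinh (t * l)) = (t * l + 1) * Real.sinh (t * l) := by field_simp
      rw [e]
      nlinarith [mul_le_mul_of_nonneg_left h4 hx.le]
    exact le_of_mul_le_mul_left this ht
  · rw [div_le_div_iff₀ hs ht]; nlinarith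

theorem lcoth {t l : ℝ} (ht : 0 < t) (hl : l ≠ 0) :
    |l| ≤ l * cothR (t * l) ∧ 1 / t ≤ l * cothR (t * l) ∧ l * cothR (t * l) ≤ |l| + 1 / t ∧
      |l / Real.sinh (l * t)| ≤ 1 / t := by
  rcases lt_or_gt_of_ne hl with h | h
  · have := lcoth_pos_case ht (neg_pos.2 h)
    have e : -l * cothR (t * -l) = l * cothR (t * l) := by
      unfold cothR
      rw [mul_neg, Real.cosh_neg, Real.sinh_neg, div_neg]; ring
    have e2 : -l / Real.sinh (-l * t) = l / Real.sinh (l * t) := by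
      rw [neg_mul, Real.sinh_neg, neg_div_neg_eq]
    rw [e, e2, abs_neg] at this
    exact this
  · exact lcoth_pos_case ht h

/-- core integrand -/
def BB (n : ℕ) (t : ℝ) (a' b' a b : Fin n → ℂ) (c : ℂ) (y : (Fin n → ℝ) × (Fin n → ℝ)) (l : ℝ) : ℂ :=
  Complex.exp (-(Complex.I * l) * ((1 / 2 : ℂ) * (dotC a (embC y.2) - dotC b (embC y.1)) + c)) *
    ((Real.exp (-t * l ^ 2) : ℝ) : ℂ) * (((l / Real.sinh (l * t)) ^ n : ℝ) : ℂ) *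
    Complex.exp (((-(l / 4) * cothR (t * l) : ℝ) : ℂ) *
          (dotC (a' + embC y.1) (a' + embC y.1) + dotC (b' + embC y.2) (b' + embC y.2)))

theorem BB_meas (n : ℕ) (t : ℝ) (a' b' a b : Fin n → ℂ) (c : ℂ) :
    Measurable (Function.uncurry (BB n t a' b' a b c)) := by
  unfold BB dotC embC cothR Function.uncurry
  simp only [Pi.add_apply]
  have := Real.measurable_sinh
  have := Real.measurable_cosh
  fun_prop

theorem ktC_left (n : ℕ) (t : ℝ) (A : HCpt n) (h : Hpt n) :
    ktC n t (HCmul A (embH h)) = ((2 * Real.pi)⁻¹ : ℝ) * (((4 * Real.pi) ^ n)⁻¹ : ℝ) *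
      TT (BB n t A.1 A.2.1 A.1 A.2.1 A.2.2 (h.1, h.2.1)) h.2.2 := by
  unfold ktC TT BB
  congr 2
  ext l
  simp only [HCmul, embH]
  simp only [← mul_assoc, ← Complex.exp_add]
  congr 4
  ring

theorem ktC_right (n : ℕ) (t : ℝ) (z : HCpt n) (h : Hpt n) :
    ktC n t (HCmul (HCinv (embH h)) z) = ((2 * Real.pi)⁻¹ : ℝ) * (((4 * Real.pi) ^ n)⁻¹ : ℝ) *
      TT (BB n t (-z.1) (-z.2.1) z.1 z.2.1 z.2.2 (h.1, h.2.1)) (-h.2.2) := by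
  unfold ktC TT BB
  congr 2
  ext l
  simp only [HCmul, embH, HCinv]
  have e : ∀ u v : Fin n → ℂ, dotC (-u + v) (-u + v) = dotC (-v + u) (-v + u) := by
    intro u v
    unfold dotC
    apply Finset.sum_congr rfl
    intro j _
    simp only [Pi.add_apply, Pi.neg_apply]
    ring
  have e2 : ∀ u v : Fin n → ℂ, dotC (-u) v = - dotC v u := by
    intro u v
    unfold dotC
    rw [← Finset.sum_neg_distrib]
    apply Finset.sum_congr rfl
    intro j _
    simp only [Pi.neg_apply]
    ring
  rw [e (embC h.1), e (embC h.2.1)]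
  rw [e2, e2]
  simp only [← mul_assoc, ← Complex.exp_add]
  congr 4
  push_cast
  ring

def PP {n : ℕ} (y : (Fin n → ℝ) × (Fin n → ℝ)) : ℝ := ∑ j, (y.1 j) ^ 2 + ∑ j, (y.2 j) ^ 2

theorem BB_im (n : ℕ) (a b : Fin n → ℂ) (c : ℂ) (y : (Fin n → ℝ) × (Fin n → ℝ)) :
    |((1 / 2 : ℂ) * (dotC a (embC y.2) - dotC b (embC y.1)) + c).im| ≤
      PP y / 16 + (∑ j, (a j).im ^ 2 + ∑ j, (b j).im ^ 2 + |c.im|) := by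
  have key : ∀ (a : Fin n → ℂ) (x : Fin n → ℝ), |(dotC a (embC x)).im| ≤ 2 * ((∑ j, (x j) ^ 2) / 16 + ∑ j, (a j).im ^ 2) := by
    intro a x
    unfold dotC embC
    rw [Complex.im_sum, Finset.sum_div, ← Finset.sum_add_distrib, Finset.mul_sum]
    refine (Finset.abs_sum_le_sum_abs _ _).trans (Finset.sum_le_sum fun j _ => ?_)
    simp only [Complex.mul_im, Complex.ofReal_re, Complex.ofReal_im, mul_zero, zero_add]
    rw [abs_le]
    constructor <;> nlinarith [sq_nonneg (x j / 4 - (a j).im), sq_nonneg (x j / 4 + (a j).im)]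
  have e : ((1 / 2 : ℂ) * (dotC a (embC y.2) - dotC b (embC y.1)) + c).im =
      1 / 2 * ((dotC a (embC y.2)).im - (dotC b (embC y.1)).im) + c.im := by
    have : (1 / 2 : ℂ) = ((1 / 2 : ℝ) : ℂ) := by norm_num
    rw [this, Complex.add_im, Complex.im_ofReal_mul, Complex.sub_im]
  rw [e]
  have h1 := key a y.2
  have h2 := key b y.1
  have h3 := le_abs_self c.im
  have h4 := neg_abs_le c.im
  unfold PP
  rw [abs_le] at *
  constructor <;> linarith [h1.1, h1.2, h2.1, h2.2]

theorem BB_re (n : ℕ) (a b : Fin n → ℂ) (y : (Fin n → ℝ) × (Fin n → ℝ)) :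
    PP y / 2 - (∑ j, ‖a j‖ ^ 2 + ∑ j, ‖b j‖ ^ 2) ≤
    (dotC (a + embC y.1) (a + embC y.1) + dotC (b + embC y.2) (b + embC y.2)).re := by
  have key : ∀ (a : Fin n → ℂ) (x : Fin n → ℝ),
      (∑ j, (x j) ^ 2) / 2 - ∑ j, ‖a j‖ ^ 2 ≤ (dotC (a + embC x) (a + embC x)).re := by
    intro a x
    unfold dotC embC
    rw [Complex.re_sum, Finset.sum_div, ← Finset.sum_sub_distrib]
    refine Finset.sum_le_sum fun j _ => ?_
    simp only [Complex.mul_re, Pi.add_apply, Complex.add_re, Complex.add_im, Complex.ofReal_re, Complex.ofReal_im, add_zero]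
    rw [← Complex.normSq_eq_norm_sq, Complex.normSq_apply]
    nlinarith [sq_nonneg (x j + 2 * (a j).re)]
  rw [Complex.add_re]
  have h1 := key a y.1
  have h2 := key b y.2
  unfold PP
  linarith

theorem BB_bound (n : ℕ) (t : ℝ) (ht : 0 < t) (a' b' a b : Fin n → ℂ) (c : ℂ) :
    ∃ C : ℝ, ∀ y, ∀ l : ℝ, l ≠ 0 → ‖BB n t a' b' a b c y l‖ ≤
      Real.exp (-(1 / (16 * t)) * PP y) * (C * Real.exp (-(t / 2) * l ^ 2)) := by
  set D := (∑ j, (a j).im ^ 2 + ∑ j, (b j).im ^ 2 + |c.im|) with hD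
  set K := (∑ j, ‖a' j‖ ^ 2 + ∑ j, ‖b' j‖ ^ 2) with hK
  have hK0 : 0 ≤ K := by positivity
  refine ⟨(1 / t) ^ n * Real.exp ((D + K / 4) ^ 2 / (2 * t) + K / (4 * t)), fun y l hl => ?_⟩
  obtain ⟨c1, c2, c3, c4⟩ := lcoth ht hl
  have h1 := BB_im n a b c y
  have h2 := BB_re n a' b' y
  rw [← hD] at h1
  rw [← hK] at h2
  have hP : 0 ≤ PP y := by unfold PP; positivity
  unfold BB
  set W := ((1 / 2 : ℂ) * (dotC a (embC y.2) - dotC b (embC y.1)) + c)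
  set R := (dotC (a' + embC y.1) (a' + embC y.1) + dotC (b' + embC y.2) (b' + embC y.2))
  have e1 : (-(Complex.I * l) * W).re = l * W.im := by simp
  rw [norm_mul, norm_mul, norm_mul, Complex.norm_exp, Complex.norm_exp, e1, Complex.re_ofReal_mul,
    Complex.norm_real, Complex.norm_real, Real.norm_eq_abs, Real.norm_eq_abs, abs_of_pos (Real.exp_pos _), abs_pow]
  set m := l * cothR (t * l) with hm
  have e2 : -(l / 4) * cothR (t * l) = -(m / 4) := by rw [hm]; ring
  rw [e2]
  have hpow : |l / Real.sinh (l * t)| ^ n ≤ (1 / t) ^ n := by gcongr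
  have hexp : l * W.im + -t * l ^ 2 + -(m / 4) * R.re ≤
      -(1 / (16 * t)) * PP y + ((D + K / 4) ^ 2 / (2 * t) + K / (4 * t)) + -(t / 2) * l ^ 2 := by
    have f1 : l * W.im ≤ |l| * (PP y / 16 + D) := by
      refine (le_abs_self _).trans ?_
      rw [abs_mul]
      gcongr
    have f2 : |l| * (PP y / 16) ≤ m * (PP y / 16) := by gcongr
    have hm0 : 0 ≤ m := (abs_nonneg l).trans c1
    have f3 : (m / 4) * (PP y / 2 - K) ≤ (m / 4) * R.re := by gcongr
    have f4 : m * K ≤ (|l| + 1 / t) * K := by gcongr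
    have f5 : 1 / t * PP y ≤ m * PP y := by gcongr
    have f6 : |l| * (D + K / 4) ≤ t / 2 * l ^ 2 + (D + K / 4) ^ 2 / (2 * t) := by
      have : t / 2 * l ^ 2 + (D + K / 4) ^ 2 / (2 * t) - |l| * (D + K / 4) = (t * |l| - (D + K / 4)) ^ 2 / (2 * t) := by
        rw [← sq_abs l]
        field_simp
        ring
      have h0 : 0 ≤ (t * |l| - (D + K / 4)) ^ 2 / (2 * t) := by positivity
      linarith
    have g1 : 1 / (16 * t) = 1 / t / 16 := by field_simp
    have g2 : K / (4 * t) = 1 / t * K / 4 := by field_simp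
    rw [g1, g2]
    nlinarith
  calc Real.exp (l * W.im) * Real.exp (-t * l ^ 2) * |l / Real.sinh (l * t)| ^ n * Real.exp (-(m / 4) * R.re)
      = |l / Real.sinh (l * t)| ^ n * Real.exp (l * W.im + -t * l ^ 2 + -(m / 4) * R.re) := by
        rw [Real.exp_add, Real.exp_add]; ring
    _ ≤ (1 / t) ^ n * Real.exp (-(1 / (16 * t)) * PP y + ((D + K / 4) ^ 2 / (2 * t) + K / (4 * t)) + -(t / 2) * l ^ 2) := by
        gcongr
    _ = _ := by
        rw [Real.exp_add, Real.exp_add]; ring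

theorem GG_memLp (n : ℕ) (b : ℝ) (hb : 0 < b) :
    MemLp (fun y : (Fin n → ℝ) × (Fin n → ℝ) => Real.exp (-b * PP y)) 2 := by
  have hc : Continuous (fun y : (Fin n → ℝ) × (Fin n → ℝ) => Real.exp (-b * PP y)) := by
    unfold PP; fun_prop
  rw [memLp_two_iff_integrable_sq hc.aestronglyMeasurable]
  have h1 : Integrable (fun x : Fin n → ℝ => Real.exp (-(2 * b) * ∑ j, (x j) ^ 2)) := by
    have := (GaussianFourier.integrable_cexp_neg_mul_sum_add (ι := Fin n) (b := ((2 * b : ℝ) : ℂ)) (by simpa using hb) 0).norm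
    refine this.congr (Eventually.of_forall fun x => ?_)
    simp only [Complex.norm_exp]
    congr 1
    have : (-((2 * b : ℝ) : ℂ) * ∑ i, (x i : ℂ) ^ 2 + ∑ i, (0 : Fin n → ℂ) i * (x i : ℂ)) = ((-(2 * b) * ∑ j, (x j) ^ 2 : ℝ) : ℂ) := by
      push_cast; simp
    rw [this, Complex.ofReal_re]
  refine (h1.mul_prod h1).congr (Eventually.of_forall fun y => ?_)
  simp only
  rw [← Real.exp_add, ← Real.exp_nat_mul]
  congr 1
  unfold PP
  push_cast
  ring

theorem HH_int (C t : ℝ) (ht : 0 < t) : Integrable (fun l : ℝ => C * Real.exp (-(t / 2) * l ^ 2)) :=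
  (integrable_exp_neg_mul_sq (by positivity)).const_mul C

theorem HH_memLp (C t : ℝ) (ht : 0 < t) : MemLp (fun l : ℝ => C * Real.exp (-(t / 2) * l ^ 2)) 2 := by
  apply MemLp.const_mul
  have hc : Continuous (fun l : ℝ => Real.exp (-(t / 2) * l ^ 2)) := by fun_prop
  rw [memLp_two_iff_integrable_sq hc.aestronglyMeasurable]
  refine (integrable_exp_neg_mul_sq ht).congr (Eventually.of_forall fun l => ?_)
  simp only
  rw [← Real.exp_nat_mul]
  congr 1
  push_cast
  ring

theorem coth_double {t l : ℝ} (ht : 0 < t) (hl : l ≠ 0) :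
    (l / 4) * cothR (2 * t * l) = (l / 4 * cothR (t * l)) / 2 + l ^ 2 / (32 * (l / 4 * cothR (t * l))) := by
  have hs : Real.sinh (t * l) ≠ 0 := by
    rw [Ne, Real.sinh_eq_zero]; positivity
  have hc : Real.cosh (t * l) ≠ 0 := (Real.cosh_pos _).ne'
  unfold cothR
  rw [mul_assoc 2 t l, Real.cosh_two_mul, Real.sinh_two_mul]
  field_simp
  ring

theorem sinh_double {t l : ℝ} (ht : 0 < t) (hl : l ≠ 0) :
    (4 * Real.pi)⁻¹ * ((l / Real.sinh (l * t)) ^ 2 * (Real.pi / (2 * (l / 4 * cothR (t * l))))) =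
      l / Real.sinh (l * (2 * t)) := by
  have hs : Real.sinh (t * l) ≠ 0 := by
    rw [Ne, Real.sinh_eq_zero]; positivity
  have hc : Real.cosh (t * l) ≠ 0 := (Real.cosh_pos _).ne'
  have hpi := Real.pi_ne_zero
  unfold cothR
  rw [show l * (2 * t) = 2 * (t * l) by ring, Real.sinh_two_mul, mul_comm l t]
  field_simp
  try norm_num

theorem gauss_step (n : ℕ) (t : ℝ) (ht : 0 < t) (a b p q : Fin n → ℂ) (c r : ℂ) (l : ℝ) (hl : l ≠ 0) :
    ((((4 * Real.pi) ^ n)⁻¹ : ℝ) : ℂ) * ∫ y, BB n t a b a b c y l * BB n t (-p) (-q) p q r y l =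
      Complex.exp (-(Complex.I * l) * ((1 / 2 : ℂ) * (dotC a q - dotC b p) + c + r)) *
        ((Real.exp (-(2 * t) * l ^ 2) : ℝ) : ℂ) *
        (((l / Real.sinh (l * (2 * t))) ^ n : ℝ) : ℂ) *
        Complex.exp (((-(l / 4) * cothR (2 * t * l) : ℝ) : ℂ) *
          (dotC (a + p) (a + p) + dotC (b + q) (b + q))) := by
  set m : ℝ := l / 4 * cothR (t * l) with hm
  have hm0 : 0 < m := by
    obtain ⟨-, c2, -, -⟩ := lcoth ht hl
    have : 0 < 1 / t := by positivity
    rw [hm]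
    linarith
  have hmC : (m : ℂ) ≠ 0 := by exact_mod_cast hm0.ne'
  set cx : Fin n → ℂ := fun j => -2 * m * a j + 2 * m * p j + (Complex.I * l / 2) * (b j + q j) with hcx
  set cu : Fin n → ℂ := fun j => -2 * m * b j + 2 * m * q j - (Complex.I * l / 2) * (a j + p j) with hcu
  set k0 : ℂ := -m * ∑ j, (a j ^ 2 + b j ^ 2 + p j ^ 2 + q j ^ 2) - Complex.I * l * (c + r) with hk0
  set pre : ℂ := ((Real.exp (-(2 * t) * l ^ 2) : ℝ) : ℂ) * ((((l / Real.sinh (l * t)) ^ 2) ^ n : ℝ) : ℂ) with hpre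
  have hprod : ∀ y : (Fin n → ℝ) × (Fin n → ℝ), BB n t a b a b c y l * BB n t (-p) (-q) p q r y l =
      pre * Complex.exp k0 * (Complex.exp (-((2 * m : ℝ) : ℂ) * ∑ i, (y.1 i : ℂ) ^ 2 + ∑ i, cx i * y.1 i) *
        Complex.exp (-((2 * m : ℝ) : ℂ) * ∑ i, (y.2 i : ℂ) ^ 2 + ∑ i, cu i * y.2 i)) := by
    intro y
    unfold BB
    have e2 : -(l / 4) * cothR (t * l) = -m := by rw [hm]; ring
    rw [e2]
    have eexp : Real.exp (-(2 * t) * l ^ 2) = Real.exp (-t * l ^ 2) * Real.exp (-t * l ^ 2) := by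
      rw [← Real.exp_add]; congr 1; ring
    rw [hpre, eexp]
    have epow : ((l / Real.sinh (l * t)) ^ 2) ^ n = (l / Real.sinh (l * t)) ^ n * (l / Real.sinh (l * t)) ^ n := by
      rw [← pow_mul, ← pow_add, two_mul]
    rw [epow, Complex.ofReal_mul, Complex.ofReal_mul]
    generalize ((Real.exp (-t * l ^ 2) : ℝ) : ℂ) = E1
    generalize (((l / Real.sinh (l * t)) ^ n : ℝ) : ℂ) = E2
    have hE : ∀ A B C D F G H : ℂ, A + B + C + D = F + G + H →
        Complex.exp A * E1 * E2 * Complex.exp B * (Complex.exp C * E1 * E2 * Complex.exp D) =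
        E1 * E1 * (E2 * E2) * Complex.exp F * (Complex.exp G * Complex.exp H) := by
      intro A B C D F G H h
      have : Complex.exp A * Complex.exp B * Complex.exp C * Complex.exp D = Complex.exp F * Complex.exp G * Complex.exp H := by
        simp only [← Complex.exp_add, h]
      linear_combination (E1 * E1 * E2 * E2) * this
    apply hE
    rw [hk0]
    unfold dotC embC
    simp only [Pi.add_apply, Pi.neg_apply, hcx, hcu]
    have hS : (-m * ∑ j, (a j ^ 2 + b j ^ 2 + p j ^ 2 + q j ^ 2) : ℂ) +
       (-((2 * m : ℝ) : ℂ) * ∑ i, (y.1 i : ℂ) ^ 2 + ∑ i, (-2 * m * a i + 2 * m * p i + (Complex.I * l / 2) * (b i + q i)) * y.1 i) +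
       (-((2 * m : ℝ) : ℂ) * ∑ i, (y.2 i : ℂ) ^ 2 + ∑ i, (-2 * m * b i + 2 * m * q i - (Complex.I * l / 2) * (a i + p i)) * y.2 i) =
       -(Complex.I * l) * ((1 / 2 : ℂ) * (∑ j, a j * (y.2 j : ℂ) - ∑ j, b j * (y.1 j : ℂ))) +
       -(Complex.I * l) * ((1 / 2 : ℂ) * (∑ j, p j * (y.2 j : ℂ) - ∑ j, q j * (y.1 j : ℂ))) +
       ((-m : ℝ) : ℂ) * (∑ j, (a j + (y.1 j : ℂ)) * (a j + (y.1 j : ℂ)) + ∑ j, (b j + (y.2 j : ℂ)) * (b j + (y.2 j : ℂ))) +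
       ((-m : ℝ) : ℂ) * (∑ j, (-p j + (y.1 j : ℂ)) * (-p j + (y.1 j : ℂ)) + ∑ j, (-q j + (y.2 j : ℂ)) * (-q j + (y.2 j : ℂ))) := by
      simp only [← Finset.sum_add_distrib, ← Finset.sum_sub_distrib, Finset.mul_sum]
      apply Finset.sum_congr rfl
      intro j _
      push_cast
      ring
    linear_combination -hS
  simp_rw [hprod]
  rw [integral_const_mul, Measure.volume_eq_prod,
    integral_prod_mul (fun x : Fin n → ℝ => Complex.exp (-((2 * m : ℝ) : ℂ) * ∑ i, (x i : ℂ) ^ 2 + ∑ i, cx i * x i))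
      (fun x : Fin n → ℝ => Complex.exp (-((2 * m : ℝ) : ℂ) * ∑ i, (x i : ℂ) ^ 2 + ∑ i, cu i * x i))]
  have hre : 0 < (((2 * m : ℝ) : ℂ)).re := by rw [Complex.ofReal_re]; positivity
  rw [GaussianFourier.integral_cexp_neg_mul_sum_add hre, GaussianFourier.integral_cexp_neg_mul_sum_add hre]
  have hcp : ((Real.pi : ℂ) / ((2 * m : ℝ) : ℂ)) ^ ((Fintype.card (Fin n) : ℂ) / 2) *
      ((Real.pi : ℂ) / ((2 * m : ℝ) : ℂ)) ^ ((Fintype.card (Fin n) : ℂ) / 2) = (((Real.pi / (2 * m)) ^ n : ℝ) : ℂ) := by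
    have hne : ((Real.pi : ℂ) / ((2 * m : ℝ) : ℂ)) ≠ 0 := by
      apply div_ne_zero
      · exact_mod_cast Real.pi_ne_zero
      · exact_mod_cast (by positivity : (2 * m : ℝ) ≠ 0)
    rw [← Complex.cpow_add _ _ hne, add_halves, Complex.cpow_natCast, Fintype.card_fin]
    push_cast
    rfl
  have hpref := congrArg (fun x : ℝ => ((x ^ n : ℝ) : ℂ)) (sinh_double ht hl)
  simp only [mul_pow, inv_pow] at hpref
  rw [← hm] at hpref
  have hfin : k0 + (∑ i, cx i ^ 2) / (4 * ((2 * m : ℝ) : ℂ)) + (∑ i, cu i ^ 2) / (4 * ((2 * m : ℝ) : ℂ)) =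
      -(Complex.I * l) * ((1 / 2 : ℂ) * (dotC a q - dotC b p) + c + r) +
      ((-(l / 4) * cothR (2 * t * l) : ℝ) : ℂ) * (dotC (a + p) (a + p) + dotC (b + q) (b + q)) := by
    have e3 : -(l / 4) * cothR (2 * t * l) = -(m / 2 + l ^ 2 / (32 * m)) := by
      rw [neg_mul, coth_double ht hl]
    rw [e3, hk0]
    unfold dotC
    have hS : (-m * ∑ j, (a j ^ 2 + b j ^ 2 + p j ^ 2 + q j ^ 2) : ℂ) + (∑ i, cx i ^ 2) / (4 * ((2 * m : ℝ) : ℂ)) + (∑ i, cu i ^ 2) / (4 * ((2 * m : ℝ) : ℂ)) =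
      -(Complex.I * l) * ((1 / 2 : ℂ) * (∑ j, a j * q j - ∑ j, b j * p j)) +
      ((-(m / 2 + l ^ 2 / (32 * m)) : ℝ) : ℂ) * (∑ j, (a + p) j * (a + p) j + ∑ j, (b + q) j * (b + q) j) := by
      simp only [← Finset.sum_add_distrib, ← Finset.sum_sub_distrib, Finset.mul_sum, Finset.sum_div]
      apply Finset.sum_congr rfl
      intro j _
      simp only [hcx, hcu, Pi.add_apply]
      push_cast
      field_simp
      ring_nf
      simp only [Complex.I_sq]
      ring
    linear_combination hS
  have hexp := congrArg Complex.exp hfin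
  rw [Complex.exp_add, Complex.exp_add, Complex.exp_add] at hexp
  rw [← hpref, hpre]
  push_cast at hcp hexp ⊢
  linear_combination (((4 * (Real.pi : ℂ)) ^ n)⁻¹ * (Complex.exp (-(2 * (t : ℂ)) * (l : ℂ) ^ 2)) * ((((l : ℂ) / Complex.sinh (l * t)) ^ 2) ^ n)) *
    (Complex.exp k0 * Complex.exp ((∑ i, cx i ^ 2) / (4 * (2 * m))) * Complex.exp ((∑ i, cu i ^ 2) / (4 * (2 * m))) * hcp + (Real.pi / (2 * m)) ^ n * hexp)
/-- For all `z, w ∈ ℍ_ℂ`,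
`∫_ℍ k_t^∼(conj(w)⁻¹ h) k_t^∼(h⁻¹ z) dh = k_{2t}^∼(conj(w)⁻¹ z)`; hence the reproducing
kernel of the image of the heat kernel transform `ℋ_t` is `𝒦^t(z,w) = k_{2t}^∼(conj(w)⁻¹ z)`. -/
theorem reproducing_kernel_identity
    (n : ℕ) (hn : 1 ≤ n) (t : ℝ) (ht : 0 < t) (z w : HCpt n) :
    ∫ h : Hpt n,
        ktC n t (HCmul (HCinv (conjHC w)) (embH h)) * ktC n t (HCmul (HCinv (embH h)) z)
      = ktC n (2 * t) (HCmul (HCinv (conjHC w)) z) := by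
  set A : HCpt n := HCinv (conjHC w) with hA
  set k : ℂ := ((2 * Real.pi)⁻¹ : ℝ) * (((4 * Real.pi) ^ n)⁻¹ : ℝ) with hk
  have h1 : ∀ h : Hpt n, ktC n t (HCmul A (embH h)) * ktC n t (HCmul (HCinv (embH h)) z) =
      k * k * (TT (BB n t A.1 A.2.1 A.1 A.2.1 A.2.2 (h.1, h.2.1)) h.2.2 *
        TT (BB n t (-z.1) (-z.2.1) z.1 z.2.1 z.2.2 (h.1, h.2.1)) (-h.2.2)) := by
    intro h
    rw [ktC_left, ktC_right]
    ring
  simp_rw [h1]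
  rw [integral_const_mul]
  have h2 := (volume_preserving_prodAssoc (α₁ := Fin n → ℝ) (β₁ := Fin n → ℝ) (γ₁ := ℝ)).integral_comp
    MeasurableEquiv.prodAssoc.measurableEmbedding
    (fun h : Hpt n => TT (BB n t A.1 A.2.1 A.1 A.2.1 A.2.2 (h.1, h.2.1)) h.2.2 *
        TT (BB n t (-z.1) (-z.2.1) z.1 z.2.1 z.2.2 (h.1, h.2.1)) (-h.2.2))
  rw [← h2]
  obtain ⟨C, hC⟩ := BB_bound n t ht A.1 A.2.1 A.1 A.2.1 A.2.2
  obtain ⟨C', hC'⟩ := BB_bound n t ht (-z.1) (-z.2.1) z.1 z.2.1 z.2.2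
  have hae : ∀ᵐ l : ℝ, l ≠ 0 := by
    simp [ae_iff]
  have hG := GG_memLp n (1 / (16 * t)) (by positivity)
  have h3 := abstract_planch (BB n t A.1 A.2.1 A.1 A.2.1 A.2.2) (BB n t (-z.1) (-z.2.1) z.1 z.2.1 z.2.2)
    (BB_meas _ _ _ _ _ _ _) (BB_meas _ _ _ _ _ _ _) _ _ _ _
    hG (HH_int C t ht) (HH_memLp C t ht) (fun y => hae.mono fun l hl => hC y l hl)
    hG (HH_int C' t ht) (HH_memLp C' t ht) (fun y => hae.mono fun l hl => hC' y l hl)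
  have h4 : ∀ p : ((Fin n → ℝ) × (Fin n → ℝ)) × ℝ,
      MeasurableEquiv.prodAssoc p = (p.1.1, p.1.2, p.2) := fun p => rfl
  simp only [h4, Prod.mk.eta]
  rw [h3]
  have h5 : ∫ l, ((((4 * Real.pi) ^ n)⁻¹ : ℝ) : ℂ) * ∫ y, BB n t A.1 A.2.1 A.1 A.2.1 A.2.2 y l *
      BB n t (-z.1) (-z.2.1) z.1 z.2.1 z.2.2 y l = _ :=
    integral_congr_ae (hae.mono fun l hl => gauss_step n t ht A.1 A.2.1 z.1 z.2.1 A.2.2 z.2.2 l hl)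
  rw [integral_const_mul] at h5
  unfold ktC
  rw [← hk]
  simp only [HCmul]
  rw [← h5, hk]
  have : (Real.pi : ℂ) ≠ 0 := by exact_mod_cast Real.pi_ne_zero
  push_cast
  field_simp
end
end
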